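/- arXiv:1001.0960 — 5 statements merged into one kernel-verified Lean document; each statement's English description precedes it below -/
import Mathlib

section
/- For any event sequence ω(0), ω(1), …, any end time t_end > 0, any initial queue states Z_l(0) ≥ 0, Q_k(0) ≥ 0, H_m(0) ∈ ℝ, and any sequence of control decisions α(t) ∈ A_{ω(t)} with auxiliary vectors γ(t) ∈ X satisfying x_m^min ≤ γ_m(t) ≤ x_m^max, the time averages over the first t_end slots satisfy: (i) ā_k ≤ b̄_k + (Q_k(t_end) − Q_k(0))/t_end for every k ∈ {1,…,K}; (ii) ȳ_l + g_l(x̄) ≤ (Z_l(t_end) − Z_l(0))/t_end + Σ_{m=1}^M β_{l,m}|H_m(t_end) − H_m(0)|/t_end for every l ∈ {1,…,L}; and (iii) there exists a vector ε ∈ ℝ^M with |ε_m| = |H_m(t_end) − H_m(0)|/t_end for each m such that x̄ + ε ∈ X. -/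
/-- Lemma 1 (Approximate Constraint Satisfaction): for any event sequence, end time
`t_end > 0`, initial queue states, and any feasible control/auxiliary decisions, the
time averages over the first `t_end` slots satisfy (i) `ā_k ≤ b̄_k + (Q_k(t_end)-Q_k(0))/t_end`,
(ii) `ȳ_l + g_l(x̄) ≤ (Z_l(t_end)-Z_l(0))/t_end + Σ_m β_{l,m}|H_m(t_end)-H_m(0)|/t_end`,
and (iii) there is `ε` with `|ε_m| = |H_m(t_end)-H_m(0)|/t_end` and `x̄ + ε ∈ X`. -/
theorem stmt_0
    {Ω Act : Type*} (ω : ℕ → Ω) (A : Ω → Set Act) (hAne : ∀ w, (A w).Nonempty)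
    (K M L : ℕ) (hK : 0 < K) (hM : 0 < M) (hL : 0 < L)
    (ahat bhat : Fin K → Act → Ω → ℝ)
    (xhat : Fin M → Act → Ω → ℝ)
    (yhat : Fin L → Act → Ω → ℝ)
    (amax bmax : Fin K → ℝ) (xmin xmax : Fin M → ℝ) (ymin ymax : Fin L → ℝ)
    -- Assumption A1 (boundedness)
    (hA1a : ∀ (w : Ω) (a' : Act), a' ∈ A w → ∀ k, 0 ≤ ahat k a' w ∧ ahat k a' w ≤ amax k)
    (hA1b : ∀ (w : Ω) (a' : Act), a' ∈ A w → ∀ k, 0 ≤ bhat k a' w ∧ bhat k a' w ≤ bmax k)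
    (hA1x : ∀ (w : Ω) (a' : Act), a' ∈ A w → ∀ m, xmin m ≤ xhat m a' w ∧ xhat m a' w ≤ xmax m)
    (hA1y : ∀ (w : Ω) (a' : Act), a' ∈ A w → ∀ l, ymin l ≤ yhat l a' w ∧ yhat l a' w ≤ ymax l)
    -- the convex set X and the cost functions g_l on the box
    (X : Set (Fin M → ℝ)) (hX : Convex ℝ X)
    (g : Fin L → (Fin M → ℝ) → ℝ) (β : Fin L → Fin M → ℝ)
    (hβ : ∀ l m, 0 ≤ β l m)
    (hgconv : ∀ l, ConvexOn ℝ {x : Fin M → ℝ | ∀ m, xmin m ≤ x m ∧ x m ≤ xmax m} (g l))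
    (hgcont : ∀ l, ContinuousOn (g l) {x : Fin M → ℝ | ∀ m, xmin m ≤ x m ∧ x m ≤ xmax m})
    (hglip : ∀ (l : Fin L) (x y : Fin M → ℝ),
      (∀ m, xmin m ≤ x m ∧ x m ≤ xmax m) →
      (∀ m, xmin m ≤ x m + y m ∧ x m + y m ≤ xmax m) →
      g l (x + y) ≤ g l x + ∑ m, β l m * |y m|)
    -- the policy: control actions and auxiliary vectors
    (α : ℕ → Act) (γ : ℕ → Fin M → ℝ)
    (hα : ∀ t, α t ∈ A (ω t))
    (hγX : ∀ t, γ t ∈ X)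
    (hγbox : ∀ t m, xmin m ≤ γ t m ∧ γ t m ≤ xmax m)
    -- queues and their update equations
    (Q : Fin K → ℕ → ℝ) (Z : Fin L → ℕ → ℝ) (H : Fin M → ℕ → ℝ)
    (hQ0 : ∀ k, 0 ≤ Q k 0) (hZ0 : ∀ l, 0 ≤ Z l 0)
    (hQ : ∀ k t, Q k (t + 1) = max (Q k t - bhat k (α t) (ω t)) 0 + ahat k (α t) (ω t))
    (hZ : ∀ l t, Z l (t + 1) = max (Z l t + yhat l (α t) (ω t) + g l (γ t)) 0)
    (hH : ∀ m t, H m (t + 1) = H m t + γ t m - xhat m (α t) (ω t))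
    (tend : ℕ) (htend : 0 < tend) :
    (∀ k, (∑ τ ∈ Finset.range tend, ahat k (α τ) (ω τ)) / tend
        ≤ (∑ τ ∈ Finset.range tend, bhat k (α τ) (ω τ)) / tend
          + (Q k tend - Q k 0) / tend) ∧
    (∀ l, (∑ τ ∈ Finset.range tend, yhat l (α τ) (ω τ)) / tend
        + g l (fun m => (∑ τ ∈ Finset.range tend, xhat m (α τ) (ω τ)) / tend)
        ≤ (Z l tend - Z l 0) / tend
          + ∑ m, β l m * |H m tend - H m 0| / tend) ∧
    (∃ ε : Fin M → ℝ, (∀ m, |ε m| = |H m tend - H m 0| / tend) ∧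
      ((fun m => (∑ τ ∈ Finset.range tend, xhat m (α τ) (ω τ)) / tend) + ε) ∈ X) := by
  have hT : (0 : ℝ) < tend := by exact_mod_cast htend
  have hQs : ∀ k n, ∑ τ ∈ Finset.range n, ahat k (α τ) (ω τ)
      ≤ ∑ τ ∈ Finset.range n, bhat k (α τ) (ω τ) + (Q k n - Q k 0) := by
    intro k n
    induction n with
    | zero => simp
    | succ n ih =>
      rw [Finset.sum_range_succ, Finset.sum_range_succ, hQ k n]
      have := le_max_left (Q k n - bhat k (α n) (ω n)) 0
      linarith
  have hZs : ∀ l n, ∑ τ ∈ Finset.range n, yhat l (α τ) (ω τ)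
      + ∑ τ ∈ Finset.range n, g l (γ τ) ≤ Z l n - Z l 0 := by
    intro l n
    induction n with
    | zero => simp
    | succ n ih =>
      rw [Finset.sum_range_succ, Finset.sum_range_succ, hZ l n]
      have := le_max_left (Z l n + yhat l (α n) (ω n) + g l (γ n)) 0
      linarith
  have hHs : ∀ m n, ∑ τ ∈ Finset.range n, γ τ m
      = ∑ τ ∈ Finset.range n, xhat m (α τ) (ω τ) + (H m n - H m 0) := by
    intro m n
    induction n with
    | zero => simp
    | succ n ih =>
      rw [Finset.sum_range_succ, Finset.sum_range_succ, hH m n, ih]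
      ring
  have hw0 : ∀ τ ∈ Finset.range tend, (0 : ℝ) ≤ (fun _ : ℕ => (tend : ℝ)⁻¹) τ :=
    fun _ _ => (inv_pos.mpr hT).le
  have hw1 : ∑ τ ∈ Finset.range tend, (fun _ : ℕ => (tend : ℝ)⁻¹) τ = 1 := by
    simp [hT.ne']
  have havg : ∑ τ ∈ Finset.range tend, (tend : ℝ)⁻¹ • γ τ
      = (fun m => (∑ τ ∈ Finset.range tend, xhat m (α τ) (ω τ)) / tend)
        + (fun m => (H m tend - H m 0) / tend) := by
    funext m
    simp only [Finset.sum_apply, Pi.smul_apply, smul_eq_mul, Pi.add_apply]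
    rw [← Finset.mul_sum, hHs m tend]
    ring
  have habs : ∀ m, |(H m tend - H m 0) / tend| = |H m tend - H m 0| / tend := by
    intro m
    rw [abs_div, abs_of_pos hT]
  refine ⟨?_, ?_, fun m => (H m tend - H m 0) / tend, habs, ?_⟩
  · intro k
    rw [← add_div]
    exact div_le_div_of_nonneg_right (hQs k tend) hT.le
  · intro l
    have hbγ := (hgconv l).1.sum_mem hw0 hw1 (fun τ _ => hγbox τ)
    have hJ := (hgconv l).map_sum_le hw0 hw1 (fun τ _ => hγbox τ)
    simp only [smul_eq_mul] at hJ
    rw [← Finset.mul_sum] at hJ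
    have hbx : ∀ m, xmin m ≤ (∑ τ ∈ Finset.range tend, xhat m (α τ) (ω τ)) / tend ∧
        (∑ τ ∈ Finset.range tend, xhat m (α τ) (ω τ)) / tend ≤ xmax m := by
      intro m
      rw [le_div_iff₀ hT, div_le_iff₀ hT]
      constructor
      · have := Finset.card_nsmul_le_sum (Finset.range tend)
          (fun τ => xhat m (α τ) (ω τ)) (xmin m) (fun τ _ => (hA1x _ _ (hα τ) m).1)
        simp only [Finset.card_range, nsmul_eq_mul] at this
        linarith
      · have := Finset.sum_le_card_nsmul (Finset.range tend)
          (fun τ => xhat m (α τ) (ω τ)) (xmax m) (fun τ _ => (hA1x _ _ (hα τ) m).2)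
        simp only [Finset.card_range, nsmul_eq_mul] at this
        linarith
    rw [havg] at hbγ hJ
    have hlip := hglip l _ (fun m => -((H m tend - H m 0) / tend)) hbγ (by
      intro m
      simpa using hbx m)
    have heq : ((fun m => (∑ τ ∈ Finset.range tend, xhat m (α τ) (ω τ)) / tend)
        + (fun m => (H m tend - H m 0) / tend)) + (fun m => -((H m tend - H m 0) / tend))
        = (fun m => (∑ τ ∈ Finset.range tend, xhat m (α τ) (ω τ)) / (tend : ℝ)) := by
      funext m
      simp
    rw [heq] at hlip
    simp only [abs_neg, habs] at hlip
    simp only [mul_div_assoc]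
    have hz := div_le_div_of_nonneg_right (hZs l tend) hT.le
    rw [add_div, div_eq_inv_mul (∑ τ ∈ Finset.range tend, g l (γ τ))] at hz
    linarith
  · rw [← havg]
    exact hX.sum_mem hw0 hw1 (fun τ _ => hγX τ)
end

section
/- Suppose Assumptions A1 and A2 hold, V > 0, and a C-approximate policy is run against an arbitrary event sequence ω(0), ω(1), ω(2), …. Then for every slot t > 0: Σ_{l=1}^L Z_l(t)² + Σ_{k=1}^K Q_k(t)² + Σ_{m=1}^M H_m(t)² ≤ tVC₀² + 2L(Θ(0)), where C₀ = √(2[(B + C)/V + (y₀^max − y₀^min) + (f^max − f^min)]). In particular, Z_l(t), Q_k(t), and |H_m(t)| are each at most √(tVC₀² + 2L(Θ(0))), and at most C₀√(tV) if all queues are initially zero. -/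
/-- The "drift-plus-penalty" expression `E_t(α,γ)` whose (approximate) per-slot
minimization defines the universal scheduling algorithm. -/
noncomputable def driftExpr {Act Ω : Type*} {K M L : ℕ}
    (ahat bhat : Fin K → Act → Ω → ℝ) (xhat : Fin M → Act → Ω → ℝ)
    (y0hat : Act → Ω → ℝ) (yhat : Fin L → Act → Ω → ℝ)
    (g : Fin L → (Fin M → ℝ) → ℝ) (f : (Fin M → ℝ) → ℝ) (V : ℝ)
    (w : Ω) (Zv : Fin L → ℝ) (Qv : Fin K → ℝ) (Hv : Fin M → ℝ)
    (a : Act) (γ : Fin M → ℝ) : ℝ :=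
  V * y0hat a w + V * f γ
    + ∑ l, Zv l * (yhat l a w + g l γ)
    + ∑ k, Qv k * (ahat k a w - bhat k a w)
    + ∑ m, Hv m * (γ m - xhat m a w)

/-- Theorem 1(a): under Assumptions A1 and A2, any `C`-approximate policy run against
an arbitrary event sequence satisfies, for every slot `t > 0`,
`ΣZ_l(t)² + ΣQ_k(t)² + ΣH_m(t)² ≤ tVC₀² + 2L(Θ(0))` with
`C₀ = √(2[(B+C)/V + (y₀^max−y₀^min) + (f^max−f^min)])`; in particular each queue is at
most `√(tVC₀² + 2L(Θ(0)))`, and at most `C₀√(tV)` if all queues start empty. -/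
theorem stmt_3
    {Ω Act : Type*} (ω : ℕ → Ω) (A : Ω → Set Act) (hAne : ∀ w, (A w).Nonempty)
    (K M L : ℕ) (hK : 0 < K) (hM : 0 < M) (hL : 0 < L)
    (ahat bhat : Fin K → Act → Ω → ℝ) (xhat : Fin M → Act → Ω → ℝ)
    (y0hat : Act → Ω → ℝ) (yhat : Fin L → Act → Ω → ℝ)
    (amax bmax : Fin K → ℝ) (xmin xmax : Fin M → ℝ)
    (y0min y0max : ℝ) (ymin ymax : Fin L → ℝ)
    -- Assumption A1 (boundedness)
    (hA1a : ∀ (w : Ω) (a' : Act), a' ∈ A w → ∀ k, 0 ≤ ahat k a' w ∧ ahat k a' w ≤ amax k)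
    (hA1b : ∀ (w : Ω) (a' : Act), a' ∈ A w → ∀ k, 0 ≤ bhat k a' w ∧ bhat k a' w ≤ bmax k)
    (hA1x : ∀ (w : Ω) (a' : Act), a' ∈ A w → ∀ m, xmin m ≤ xhat m a' w ∧ xhat m a' w ≤ xmax m)
    (hA1y0 : ∀ (w : Ω) (a' : Act), a' ∈ A w → y0min ≤ y0hat a' w ∧ y0hat a' w ≤ y0max)
    (hA1y : ∀ (w : Ω) (a' : Act), a' ∈ A w → ∀ l, ymin l ≤ yhat l a' w ∧ yhat l a' w ≤ ymax l)
    -- the convex set X and the cost functions f, g_l on the box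
    (X : Set (Fin M → ℝ)) (hX : Convex ℝ X)
    (f : (Fin M → ℝ) → ℝ) (g : Fin L → (Fin M → ℝ) → ℝ)
    (fmin fmax : ℝ) (gmin gmax : Fin L → ℝ)
    (hfconv : ConvexOn ℝ {x : Fin M → ℝ | ∀ m, xmin m ≤ x m ∧ x m ≤ xmax m} f)
    (hfcont : ContinuousOn f {x : Fin M → ℝ | ∀ m, xmin m ≤ x m ∧ x m ≤ xmax m})
    (hfbd : ∀ x ∈ {x : Fin M → ℝ | ∀ m, xmin m ≤ x m ∧ x m ≤ xmax m},
      fmin ≤ f x ∧ f x ≤ fmax)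
    (hgconv : ∀ l, ConvexOn ℝ {x : Fin M → ℝ | ∀ m, xmin m ≤ x m ∧ x m ≤ xmax m} (g l))
    (hgcont : ∀ l, ContinuousOn (g l) {x : Fin M → ℝ | ∀ m, xmin m ≤ x m ∧ x m ≤ xmax m})
    (hgbd : ∀ l, ∀ x ∈ {x : Fin M → ℝ | ∀ m, xmin m ≤ x m ∧ x m ≤ xmax m},
      gmin l ≤ g l x ∧ g l x ≤ gmax l)
    -- Assumption A2
    (hA2 : ∀ t, ∃ a' ∈ A (ω t),
      (∀ l, yhat l a' (ω t) + g l (fun m => xhat m a' (ω t)) ≤ 0) ∧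
      (∀ k, ahat k a' (ω t) ≤ bhat k a' (ω t)) ∧
      (fun m => xhat m a' (ω t)) ∈ X)
    -- parameters
    (V C B : ℝ) (hV : 0 < V) (hC : 0 ≤ C)
    (hB : ∀ (t : ℕ) (a' : Act) (γ' : Fin M → ℝ), a' ∈ A (ω t) → γ' ∈ X →
      (∀ m, xmin m ≤ γ' m ∧ γ' m ≤ xmax m) →
      (1 / 2) * ∑ l, (yhat l a' (ω t) + g l γ') ^ 2
        + (1 / 2) * ∑ k, ((bhat k a' (ω t)) ^ 2 + (ahat k a' (ω t)) ^ 2)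
        + (1 / 2) * ∑ m, (γ' m - xhat m a' (ω t)) ^ 2 ≤ B)
    -- the C-approximate policy and the queues
    (α : ℕ → Act) (γ : ℕ → Fin M → ℝ)
    (hα : ∀ t, α t ∈ A (ω t)) (hγX : ∀ t, γ t ∈ X)
    (hγbox : ∀ t m, xmin m ≤ γ t m ∧ γ t m ≤ xmax m)
    (Q : Fin K → ℕ → ℝ) (Z : Fin L → ℕ → ℝ) (H : Fin M → ℕ → ℝ)
    (hQ0 : ∀ k, 0 ≤ Q k 0) (hZ0 : ∀ l, 0 ≤ Z l 0)
    (hQ : ∀ k t, Q k (t + 1) = max (Q k t - bhat k (α t) (ω t)) 0 + ahat k (α t) (ω t))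
    (hZ : ∀ l t, Z l (t + 1) = max (Z l t + yhat l (α t) (ω t) + g l (γ t)) 0)
    (hH : ∀ m t, H m (t + 1) = H m t + γ t m - xhat m (α t) (ω t))
    (hCapprox : ∀ (t : ℕ) (a' : Act) (γ' : Fin M → ℝ), a' ∈ A (ω t) → γ' ∈ X →
      (∀ m, xmin m ≤ γ' m ∧ γ' m ≤ xmax m) →
      driftExpr ahat bhat xhat y0hat yhat g f V (ω t)
          (fun l => Z l t) (fun k => Q k t) (fun m => H m t) (α t) (γ t)
        ≤ driftExpr ahat bhat xhat y0hat yhat g f V (ω t)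
          (fun l => Z l t) (fun k => Q k t) (fun m => H m t) a' γ' + C)
    -- the Lyapunov function and the constant C₀
    (Ly : ℕ → ℝ)
    (hLy : ∀ t, Ly t = (1 / 2) * ∑ l, (Z l t) ^ 2 + (1 / 2) * ∑ k, (Q k t) ^ 2
        + (1 / 2) * ∑ m, (H m t) ^ 2)
    (C₀ : ℝ)
    (hC₀ : C₀ = Real.sqrt (2 * ((B + C) / V + (y0max - y0min) + (fmax - fmin)))) :
    ∀ t : ℕ, 0 < t →
      (∑ l, (Z l t) ^ 2 + ∑ k, (Q k t) ^ 2 + ∑ m, (H m t) ^ 2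
          ≤ (t : ℝ) * V * C₀ ^ 2 + 2 * Ly 0) ∧
      (∀ l, Z l t ≤ Real.sqrt ((t : ℝ) * V * C₀ ^ 2 + 2 * Ly 0)) ∧
      (∀ k, Q k t ≤ Real.sqrt ((t : ℝ) * V * C₀ ^ 2 + 2 * Ly 0)) ∧
      (∀ m, |H m t| ≤ Real.sqrt ((t : ℝ) * V * C₀ ^ 2 + 2 * Ly 0)) ∧
      (((∀ l, Z l 0 = 0) ∧ (∀ k, Q k 0 = 0) ∧ (∀ m, H m 0 = 0)) →
        (∀ l, Z l t ≤ C₀ * Real.sqrt ((t : ℝ) * V)) ∧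
        (∀ k, Q k t ≤ C₀ * Real.sqrt ((t : ℝ) * V)) ∧
        (∀ m, |H m t| ≤ C₀ * Real.sqrt ((t : ℝ) * V))) := by
  classical
  have hQn : ∀ t k, 0 ≤ Q k t := by
    intro t k
    cases t with
    | zero => exact hQ0 k
    | succ t =>
      rw [hQ]
      exact add_nonneg (le_max_right _ _) (hA1a _ _ (hα t) k).1
  have hZn : ∀ t l, 0 ≤ Z l t := by
    intro t l
    cases t with
    | zero => exact hZ0 l
    | succ t => rw [hZ]; exact le_max_right _ _
  have hB0 : 0 ≤ B := by
    refine le_trans ?_ (hB 0 (α 0) (γ 0) (hα 0) (hγX 0) (hγbox 0))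
    positivity
  have hy0 : 0 ≤ y0max - y0min := by
    have h := hA1y0 _ _ (hα 0)
    linarith [h.1, h.2]
  have hf0 : 0 ≤ fmax - fmin := by
    have h := hfbd (γ 0) (hγbox 0)
    linarith [h.1, h.2]
  have hC0n : 0 ≤ C₀ := by rw [hC₀]; exact Real.sqrt_nonneg _
  have hD : V * C₀ ^ 2 = 2 * (B + C + V * (y0max - y0min) + V * (fmax - fmin)) := by
    rw [hC₀, Real.sq_sqrt (by positivity)]
    field_simp
  -- one-slot drift bound
  have hstep : ∀ t, ∑ l, (Z l (t + 1)) ^ 2 + ∑ k, (Q k (t + 1)) ^ 2 + ∑ m, (H m (t + 1)) ^ 2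
      ≤ (∑ l, (Z l t) ^ 2 + ∑ k, (Q k t) ^ 2 + ∑ m, (H m t) ^ 2) + V * C₀ ^ 2 := by
    intro t
    have h1 : ∑ l, (Z l (t + 1)) ^ 2 ≤ ∑ l, (Z l t) ^ 2
        + ∑ l, (yhat l (α t) (ω t) + g l (γ t)) ^ 2
        + 2 * ∑ l, Z l t * (yhat l (α t) (ω t) + g l (γ t)) := by
      rw [Finset.mul_sum, ← Finset.sum_add_distrib, ← Finset.sum_add_distrib]
      refine Finset.sum_le_sum fun l _ => ?_
      rw [hZ]
      rcases max_cases (Z l t + yhat l (α t) (ω t) + g l (γ t)) 0 with h | h <;> rw [h.1]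
      · apply le_of_eq; ring
      · nlinarith [sq_nonneg (Z l t + yhat l (α t) (ω t) + g l (γ t))]
    have h2 : ∑ k, (Q k (t + 1)) ^ 2 ≤ ∑ k, (Q k t) ^ 2
        + ∑ k, ((bhat k (α t) (ω t)) ^ 2 + (ahat k (α t) (ω t)) ^ 2)
        + 2 * ∑ k, Q k t * (ahat k (α t) (ω t) - bhat k (α t) (ω t)) := by
      rw [Finset.mul_sum, ← Finset.sum_add_distrib, ← Finset.sum_add_distrib]
      refine Finset.sum_le_sum fun k _ => ?_
      rw [hQ]
      have ha := (hA1a _ _ (hα t) k).1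
      have hb := (hA1b _ _ (hα t) k).1
      have hq := hQn t k
      rcases max_cases (Q k t - bhat k (α t) (ω t)) 0 with h | h <;> rw [h.1]
      · nlinarith [mul_nonneg ha hb]
      · nlinarith [mul_nonneg ha hq, sq_nonneg (Q k t - bhat k (α t) (ω t))]
    have h3 : ∑ m, (H m (t + 1)) ^ 2 = ∑ m, (H m t) ^ 2
        + ∑ m, (γ t m - xhat m (α t) (ω t)) ^ 2
        + 2 * ∑ m, H m t * (γ t m - xhat m (α t) (ω t)) := by
      rw [Finset.mul_sum, ← Finset.sum_add_distrib, ← Finset.sum_add_distrib]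
      refine Finset.sum_congr rfl fun m _ => ?_
      rw [hH]
      ring
    have hBt := hB t (α t) (γ t) (hα t) (hγX t) (hγbox t)
    obtain ⟨a', ha', hy', hab', hx'⟩ := hA2 t
    have hbox' := hA1x _ _ ha'
    have hE := hCapprox t a' (fun m => xhat m a' (ω t)) ha' hx' hbox'
    unfold driftExpr at hE
    have e1 : ∑ l, Z l t * (yhat l a' (ω t) + g l (fun m => xhat m a' (ω t))) ≤ 0 :=
      Finset.sum_nonpos fun l _ => mul_nonpos_of_nonneg_of_nonpos (hZn t l) (hy' l)
    have e2 : ∑ k, Q k t * (ahat k a' (ω t) - bhat k a' (ω t)) ≤ 0 :=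
      Finset.sum_nonpos fun k _ =>
        mul_nonpos_of_nonneg_of_nonpos (hQn t k) (sub_nonpos.2 (hab' k))
    have e3 : ∑ m, H m t * (xhat m a' (ω t) - xhat m a' (ω t)) = 0 := by simp
    have b1 := mul_le_mul_of_nonneg_left (hA1y0 _ _ ha').2 hV.le
    have b2 := mul_le_mul_of_nonneg_left (hA1y0 _ _ (hα t)).1 hV.le
    have b3 := mul_le_mul_of_nonneg_left (hfbd _ hbox').2 hV.le
    have b4 := mul_le_mul_of_nonneg_left (hfbd _ (hγbox t)).1 hV.le
    rw [hD]
    linarith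
  have hmain : ∀ t : ℕ, ∑ l, (Z l t) ^ 2 + ∑ k, (Q k t) ^ 2 + ∑ m, (H m t) ^ 2
      ≤ (t : ℝ) * V * C₀ ^ 2 + 2 * Ly 0 := by
    intro t
    induction t with
    | zero => rw [hLy]; push_cast; linarith
    | succ t ih =>
      have := hstep t
      push_cast
      linarith
  have sZ : ∀ t, 0 ≤ ∑ l, (Z l t) ^ 2 := fun t => by positivity
  have sQ : ∀ t, 0 ≤ ∑ k, (Q k t) ^ 2 := fun t => by positivity
  have sH : ∀ t, 0 ≤ ∑ m, (H m t) ^ 2 := fun t => by positivity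
  intro t _
  have hm := hmain t
  have rZ : ∀ l, Z l t ≤ Real.sqrt ((t : ℝ) * V * C₀ ^ 2 + 2 * Ly 0) := by
    intro l
    apply Real.le_sqrt_of_sq_le
    have := Finset.single_le_sum (f := fun l => (Z l t) ^ 2)
      (fun i _ => sq_nonneg _) (Finset.mem_univ l)
    linarith [sQ t, sH t]
  have rQ : ∀ k, Q k t ≤ Real.sqrt ((t : ℝ) * V * C₀ ^ 2 + 2 * Ly 0) := by
    intro k
    apply Real.le_sqrt_of_sq_le
    have := Finset.single_le_sum (f := fun k => (Q k t) ^ 2)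
      (fun i _ => sq_nonneg _) (Finset.mem_univ k)
    linarith [sZ t, sH t]
  have rH : ∀ m, |H m t| ≤ Real.sqrt ((t : ℝ) * V * C₀ ^ 2 + 2 * Ly 0) := by
    intro m
    apply Real.le_sqrt_of_sq_le
    rw [sq_abs]
    have := Finset.single_le_sum (f := fun m => (H m t) ^ 2)
      (fun i _ => sq_nonneg _) (Finset.mem_univ m)
    linarith [sZ t, sQ t]
  refine ⟨hm, rZ, rQ, rH, ?_⟩
  rintro ⟨z0, q0, h0⟩
  have hL0 : Ly 0 = 0 := by rw [hLy]; simp [z0, q0, h0]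
  have hs : Real.sqrt ((t : ℝ) * V * C₀ ^ 2 + 2 * Ly 0) = C₀ * Real.sqrt ((t : ℝ) * V) := by
    rw [hL0, mul_zero, add_zero, Real.sqrt_mul (by positivity), Real.sqrt_sq hC0n, mul_comm]
  rw [hs] at rZ rQ rH
  exact ⟨rZ, rQ, rH⟩
end

section
/- Suppose Assumptions A1 and A2 hold, V > 0, a C-approximate policy is run against an arbitrary event sequence, and all queues are initially empty. Then for any designated time t_end > 0 the time averages over the first t_end slots satisfy: ȳ_l + g_l(x̄) ≤ C₀√(V/t_end)[1 + Σ_{m=1}^M β_{l,m}] for all l ∈ {1,…,L}; ā_k ≤ b̄_k + C₀√(V/t_end) for all k ∈ {1,…,K}; and there exists ε ∈ ℝ^M with |ε_m| ≤ C₀√(V/t_end) for all m such that x̄ + ε ∈ X; where C₀ = √(2[(B + C)/V + (y₀^max − y₀^min) + (f^max − f^min)]). -/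
/-- Theorem 1(b): under Assumptions A1 and A2, a `C`-approximate policy started from
empty queues satisfies, for any `t_end > 0`:
`ȳ_l + g_l(x̄) ≤ C₀√(V/t_end)[1 + Σ_m β_{l,m}]` for every `l`,
`ā_k ≤ b̄_k + C₀√(V/t_end)` for every `k`, and there is `ε` with
`|ε_m| ≤ C₀√(V/t_end)` such that `x̄ + ε ∈ X`. -/
theorem stmt_4
    {Ω Act : Type*} (ω : ℕ → Ω) (A : Ω → Set Act) (hAne : ∀ w, (A w).Nonempty)
    (K M L : ℕ) (hK : 0 < K) (hM : 0 < M) (hL : 0 < L)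
    (ahat bhat : Fin K → Act → Ω → ℝ) (xhat : Fin M → Act → Ω → ℝ)
    (y0hat : Act → Ω → ℝ) (yhat : Fin L → Act → Ω → ℝ)
    (amax bmax : Fin K → ℝ) (xmin xmax : Fin M → ℝ)
    (y0min y0max : ℝ) (ymin ymax : Fin L → ℝ)
    -- Assumption A1 (boundedness)
    (hA1a : ∀ (w : Ω) (a' : Act), a' ∈ A w → ∀ k, 0 ≤ ahat k a' w ∧ ahat k a' w ≤ amax k)
    (hA1b : ∀ (w : Ω) (a' : Act), a' ∈ A w → ∀ k, 0 ≤ bhat k a' w ∧ bhat k a' w ≤ bmax k)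
    (hA1x : ∀ (w : Ω) (a' : Act), a' ∈ A w → ∀ m, xmin m ≤ xhat m a' w ∧ xhat m a' w ≤ xmax m)
    (hA1y0 : ∀ (w : Ω) (a' : Act), a' ∈ A w → y0min ≤ y0hat a' w ∧ y0hat a' w ≤ y0max)
    (hA1y : ∀ (w : Ω) (a' : Act), a' ∈ A w → ∀ l, ymin l ≤ yhat l a' w ∧ yhat l a' w ≤ ymax l)
    -- the convex set X and the cost functions f, g_l on the box
    (X : Set (Fin M → ℝ)) (hX : Convex ℝ X)
    (f : (Fin M → ℝ) → ℝ) (g : Fin L → (Fin M → ℝ) → ℝ)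
    (fmin fmax : ℝ) (gmin gmax : Fin L → ℝ) (β : Fin L → Fin M → ℝ)
    (hβ : ∀ l m, 0 ≤ β l m)
    (hfconv : ConvexOn ℝ {x : Fin M → ℝ | ∀ m, xmin m ≤ x m ∧ x m ≤ xmax m} f)
    (hfcont : ContinuousOn f {x : Fin M → ℝ | ∀ m, xmin m ≤ x m ∧ x m ≤ xmax m})
    (hfbd : ∀ x ∈ {x : Fin M → ℝ | ∀ m, xmin m ≤ x m ∧ x m ≤ xmax m},
      fmin ≤ f x ∧ f x ≤ fmax)
    (hgconv : ∀ l, ConvexOn ℝ {x : Fin M → ℝ | ∀ m, xmin m ≤ x m ∧ x m ≤ xmax m} (g l))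
    (hgcont : ∀ l, ContinuousOn (g l) {x : Fin M → ℝ | ∀ m, xmin m ≤ x m ∧ x m ≤ xmax m})
    (hgbd : ∀ l, ∀ x ∈ {x : Fin M → ℝ | ∀ m, xmin m ≤ x m ∧ x m ≤ xmax m},
      gmin l ≤ g l x ∧ g l x ≤ gmax l)
    (hglip : ∀ (l : Fin L) (x y : Fin M → ℝ),
      (∀ m, xmin m ≤ x m ∧ x m ≤ xmax m) →
      (∀ m, xmin m ≤ x m + y m ∧ x m + y m ≤ xmax m) →
      g l (x + y) ≤ g l x + ∑ m, β l m * |y m|)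
    -- Assumption A2
    (hA2 : ∀ t, ∃ a' ∈ A (ω t),
      (∀ l, yhat l a' (ω t) + g l (fun m => xhat m a' (ω t)) ≤ 0) ∧
      (∀ k, ahat k a' (ω t) ≤ bhat k a' (ω t)) ∧
      (fun m => xhat m a' (ω t)) ∈ X)
    -- parameters
    (V C B : ℝ) (hV : 0 < V) (hC : 0 ≤ C)
    (hB : ∀ (t : ℕ) (a' : Act) (γ' : Fin M → ℝ), a' ∈ A (ω t) → γ' ∈ X →
      (∀ m, xmin m ≤ γ' m ∧ γ' m ≤ xmax m) →
      (1 / 2) * ∑ l, (yhat l a' (ω t) + g l γ') ^ 2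
        + (1 / 2) * ∑ k, ((bhat k a' (ω t)) ^ 2 + (ahat k a' (ω t)) ^ 2)
        + (1 / 2) * ∑ m, (γ' m - xhat m a' (ω t)) ^ 2 ≤ B)
    -- the C-approximate policy and the queues (initially empty)
    (α : ℕ → Act) (γ : ℕ → Fin M → ℝ)
    (hα : ∀ t, α t ∈ A (ω t)) (hγX : ∀ t, γ t ∈ X)
    (hγbox : ∀ t m, xmin m ≤ γ t m ∧ γ t m ≤ xmax m)
    (Q : Fin K → ℕ → ℝ) (Z : Fin L → ℕ → ℝ) (H : Fin M → ℕ → ℝ)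
    (hQ0 : ∀ k, Q k 0 = 0) (hZ0 : ∀ l, Z l 0 = 0) (hH0 : ∀ m, H m 0 = 0)
    (hQ : ∀ k t, Q k (t + 1) = max (Q k t - bhat k (α t) (ω t)) 0 + ahat k (α t) (ω t))
    (hZ : ∀ l t, Z l (t + 1) = max (Z l t + yhat l (α t) (ω t) + g l (γ t)) 0)
    (hH : ∀ m t, H m (t + 1) = H m t + γ t m - xhat m (α t) (ω t))
    (hCapprox : ∀ (t : ℕ) (a' : Act) (γ' : Fin M → ℝ), a' ∈ A (ω t) → γ' ∈ X →
      (∀ m, xmin m ≤ γ' m ∧ γ' m ≤ xmax m) →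
      driftExpr ahat bhat xhat y0hat yhat g f V (ω t)
          (fun l => Z l t) (fun k => Q k t) (fun m => H m t) (α t) (γ t)
        ≤ driftExpr ahat bhat xhat y0hat yhat g f V (ω t)
          (fun l => Z l t) (fun k => Q k t) (fun m => H m t) a' γ' + C)
    -- the constant C₀
    (C₀ : ℝ)
    (hC₀ : C₀ = Real.sqrt (2 * ((B + C) / V + (y0max - y0min) + (fmax - fmin))))
    (tend : ℕ) (htend : 0 < tend) :
    (∀ l, (∑ τ ∈ Finset.range tend, yhat l (α τ) (ω τ)) / tend
        + g l (fun m => (∑ τ ∈ Finset.range tend, xhat m (α τ) (ω τ)) / tend)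
        ≤ C₀ * Real.sqrt (V / tend) * (1 + ∑ m, β l m)) ∧
    (∀ k, (∑ τ ∈ Finset.range tend, ahat k (α τ) (ω τ)) / tend
        ≤ (∑ τ ∈ Finset.range tend, bhat k (α τ) (ω τ)) / tend
          + C₀ * Real.sqrt (V / tend)) ∧
    (∃ ε : Fin M → ℝ, (∀ m, |ε m| ≤ C₀ * Real.sqrt (V / tend)) ∧
      ((fun m => (∑ τ ∈ Finset.range tend, xhat m (α τ) (ω τ)) / tend) + ε) ∈ X) := by
  have hn : (0:ℝ) < tend := by exact_mod_cast htend
  have hQnn : ∀ k t, 0 ≤ Q k t := by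
    intro k t
    cases t with
    | zero => rw [hQ0]
    | succ t =>
      rw [hQ]
      have := (hA1a (ω t) (α t) (hα t) k).1
      have := le_max_right (Q k t - bhat k (α t) (ω t)) 0
      linarith
  have hZnn : ∀ l t, 0 ≤ Z l t := by
    intro l t
    cases t with
    | zero => rw [hZ0]
    | succ t => rw [hZ]; exact le_max_right _ _
  -- Lyapunov function bound
  obtain ⟨D, hD⟩ : ∃ D, D = B + C + V * ((y0max - y0min) + (fmax - fmin)) := ⟨_, rfl⟩
  have hstep : ∀ t, (∑ l, Z l (t+1) ^ 2 + ∑ k, Q k (t+1) ^ 2 + ∑ m, H m (t+1) ^ 2)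
      ≤ (∑ l, Z l t ^ 2 + ∑ k, Q k t ^ 2 + ∑ m, H m t ^ 2) + 2 * D := by
    intro t
    obtain ⟨a', ha', h1, h2, h3⟩ := hA2 t
    have hxb := hA1x (ω t) a' ha'
    have hE := hCapprox t a' (fun m => xhat m a' (ω t)) ha' h3 hxb
    have hBt := hB t (α t) (γ t) (hα t) (hγX t) (hγbox t)
    unfold driftExpr at hE
    have e1 : ∑ l, Z l t * (yhat l a' (ω t) + g l (fun m => xhat m a' (ω t))) ≤ 0 :=
      Finset.sum_nonpos fun l _ => mul_nonpos_of_nonneg_of_nonpos (hZnn l t) (h1 l)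
    have e2 : ∑ k, Q k t * (ahat k a' (ω t) - bhat k a' (ω t)) ≤ 0 :=
      Finset.sum_nonpos fun k _ =>
        mul_nonpos_of_nonneg_of_nonpos (hQnn k t) (sub_nonpos.2 (h2 k))
    have e3 : ∑ m, H m t * (xhat m a' (ω t) - xhat m a' (ω t)) = 0 := by simp
    have e4 := (hA1y0 (ω t) a' ha').2
    have e5 := (hA1y0 (ω t) (α t) (hα t)).1
    have e6 := (hfbd (fun m => xhat m a' (ω t)) hxb).2
    have e7 := (hfbd (γ t) (hγbox t)).1
    have e8 : V * y0hat a' (ω t) + V * f (fun m => xhat m a' (ω t))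
        - V * y0hat (α t) (ω t) - V * f (γ t)
        ≤ V * ((y0max - y0min) + (fmax - fmin)) := by
      have : V * (y0hat a' (ω t) + f (fun m => xhat m a' (ω t))
        - y0hat (α t) (ω t) - f (γ t)) ≤ V * ((y0max - y0min) + (fmax - fmin)) :=
        mul_le_mul_of_nonneg_left (by linarith) hV.le
      linarith
    have s1 : ∑ l, Z l (t+1) ^ 2 ≤ ∑ l, Z l t ^ 2
        + 2 * ∑ l, Z l t * (yhat l (α t) (ω t) + g l (γ t))
        + ∑ l, (yhat l (α t) (ω t) + g l (γ t)) ^ 2 := by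
      rw [Finset.mul_sum, ← Finset.sum_add_distrib, ← Finset.sum_add_distrib]
      refine Finset.sum_le_sum fun l _ => ?_
      rw [hZ]
      rcases max_cases (Z l t + yhat l (α t) (ω t) + g l (γ t)) 0 with ⟨h, _⟩ | ⟨h, _⟩ <;> rw [h]
      · exact le_of_eq (by ring)
      · nlinarith [sq_nonneg (Z l t + (yhat l (α t) (ω t) + g l (γ t)))]
    have s2 : ∑ k, Q k (t+1) ^ 2 ≤ ∑ k, Q k t ^ 2
        + 2 * ∑ k, Q k t * (ahat k (α t) (ω t) - bhat k (α t) (ω t))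
        + ∑ k, ((bhat k (α t) (ω t)) ^ 2 + (ahat k (α t) (ω t)) ^ 2) := by
      rw [Finset.mul_sum, ← Finset.sum_add_distrib, ← Finset.sum_add_distrib]
      refine Finset.sum_le_sum fun k _ => ?_
      rw [hQ]
      have ha := (hA1a (ω t) (α t) (hα t) k).1
      have hb := (hA1b (ω t) (α t) (hα t) k).1
      have hq := hQnn k t
      have hab := mul_nonneg ha hb
      have hqa := mul_nonneg hq ha
      rcases max_cases (Q k t - bhat k (α t) (ω t)) 0 with ⟨h, _⟩ | ⟨h, _⟩ <;> rw [h]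
      · nlinarith
      · nlinarith [sq_nonneg (Q k t - bhat k (α t) (ω t))]
    have s3 : ∑ m, H m (t+1) ^ 2 = ∑ m, H m t ^ 2
        + 2 * ∑ m, H m t * (γ t m - xhat m (α t) (ω t))
        + ∑ m, (γ t m - xhat m (α t) (ω t)) ^ 2 := by
      rw [Finset.mul_sum, ← Finset.sum_add_distrib, ← Finset.sum_add_distrib]
      refine Finset.sum_congr rfl fun m _ => ?_
      rw [hH]; ring
    linarith
  have hLyap : ∀ t : ℕ, (∑ l, Z l t ^ 2 + ∑ k, Q k t ^ 2 + ∑ m, H m t ^ 2) ≤ t * (2 * D) := by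
    intro t
    induction t with
    | zero => simp [hZ0, hQ0, hH0]
    | succ t ih => have := hstep t; push_cast; linarith
  have nZ : ∀ t, 0 ≤ ∑ l, Z l t ^ 2 := fun t => Finset.sum_nonneg fun _ _ => sq_nonneg _
  have nQ : ∀ t, 0 ≤ ∑ k, Q k t ^ 2 := fun t => Finset.sum_nonneg fun _ _ => sq_nonneg _
  have nH : ∀ t, 0 ≤ ∑ m, H m t ^ 2 := fun t => Finset.sum_nonneg fun _ _ => sq_nonneg _
  have hRnn : 0 ≤ C₀ * Real.sqrt (V / tend) := by rw [hC₀]; positivity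
  have hDnn : 0 ≤ 2 * D := by
    have := hLyap 1
    have := nZ 1
    have := nQ 1
    have := nH 1
    push_cast at *
    linarith
  have hRsq : (C₀ * Real.sqrt (V / tend)) ^ 2 * tend = 2 * D := by
    have hc : 2 * ((B + C) / V + (y0max - y0min) + (fmax - fmin)) = 2 * D / V := by
      rw [hD]; field_simp; ring
    rw [hC₀, hc, mul_pow, Real.sq_sqrt (by positivity), Real.sq_sqrt (by positivity)]
    field_simp
  obtain ⟨R, hR⟩ : ∃ R, R = C₀ * Real.sqrt (V / tend) := ⟨_, rfl⟩
  rw [← hR] at hRnn hRsq ⊢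
  have hkey : ∀ q : ℝ, q ^ 2 ≤ tend * (2 * D) → |q| ≤ tend * R := by
    intro q hq
    rw [← hRsq] at hq
    refine abs_le_of_sq_le_sq ?_ (by positivity)
    calc q ^ 2 ≤ _ := hq
      _ = (tend * R) ^ 2 := by ring
  have bZ : ∀ l, Z l tend ≤ tend * R := fun l => (le_abs_self _).trans <| hkey _ <| by
    have := Finset.single_le_sum (f := fun l => Z l tend ^ 2) (fun _ _ => sq_nonneg _)
      (Finset.mem_univ l)
    have := hLyap tend
    have := nQ tend
    have := nH tend
    linarith
  have bQ : ∀ k, Q k tend ≤ tend * R := fun k => (le_abs_self _).trans <| hkey _ <| by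
    have := Finset.single_le_sum (f := fun k => Q k tend ^ 2) (fun _ _ => sq_nonneg _)
      (Finset.mem_univ k)
    have := hLyap tend
    have := nZ tend
    have := nH tend
    linarith
  have bH : ∀ m, |H m tend| ≤ tend * R := fun m => hkey _ <| by
    have := Finset.single_le_sum (f := fun m => H m tend ^ 2) (fun _ _ => sq_nonneg _)
      (Finset.mem_univ m)
    have := hLyap tend
    have := nZ tend
    have := nQ tend
    linarith
  -- telescoping
  have tZ : ∀ l t, ∑ τ ∈ Finset.range t, yhat l (α τ) (ω τ) + ∑ τ ∈ Finset.range t, g l (γ τ)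
      ≤ Z l t := by
    intro l t
    induction t with
    | zero => simp [hZ0]
    | succ t ih =>
      rw [Finset.sum_range_succ, Finset.sum_range_succ, hZ]
      have := le_max_left (Z l t + yhat l (α t) (ω t) + g l (γ t)) 0
      linarith
  have tQ : ∀ k t, ∑ τ ∈ Finset.range t, ahat k (α τ) (ω τ)
      ≤ ∑ τ ∈ Finset.range t, bhat k (α τ) (ω τ) + Q k t := by
    intro k t
    induction t with
    | zero => simp [hQ0]
    | succ t ih =>
      rw [Finset.sum_range_succ, Finset.sum_range_succ, hQ]
      have := le_max_left (Q k t - bhat k (α t) (ω t)) 0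
      linarith
  have tH : ∀ m t, H m t = ∑ τ ∈ Finset.range t, γ τ m
      - ∑ τ ∈ Finset.range t, xhat m (α τ) (ω τ) := by
    intro m t
    induction t with
    | zero => simp [hH0]
    | succ t ih =>
      rw [Finset.sum_range_succ, Finset.sum_range_succ, hH, ih]
      ring
  have hw : ∑ _τ ∈ Finset.range tend, (1 / (tend:ℝ)) = 1 := by
    rw [Finset.sum_const, Finset.card_range, nsmul_eq_mul]; field_simp
  have hgam : (∑ τ ∈ Finset.range tend, (1 / (tend:ℝ)) • γ τ)
      = fun m => (∑ τ ∈ Finset.range tend, γ τ m) / tend := by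
    funext m
    rw [Finset.sum_apply, Finset.sum_div]
    refine Finset.sum_congr rfl fun τ _ => ?_
    simp only [Pi.smul_apply, smul_eq_mul]; ring
  have havg : ∀ (u : ℕ → ℝ) (lo hi : ℝ), (∀ τ, lo ≤ u τ ∧ u τ ≤ hi) →
      lo ≤ (∑ τ ∈ Finset.range tend, u τ) / tend ∧ (∑ τ ∈ Finset.range tend, u τ) / tend ≤ hi := by
    intro u lo hi h
    rw [le_div_iff₀ hn, div_le_iff₀ hn]
    constructor
    · have := Finset.card_nsmul_le_sum (Finset.range tend) u lo (fun τ _ => (h τ).1)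
      rw [Finset.card_range, nsmul_eq_mul] at this
      linarith
    · have := Finset.sum_le_card_nsmul (Finset.range tend) u hi (fun τ _ => (h τ).2)
      rw [Finset.card_range, nsmul_eq_mul] at this
      linarith
  have hHdiv : ∀ m, |H m tend / tend| ≤ R := by
    intro m
    rw [abs_div, abs_of_pos hn, div_le_iff₀ hn]
    linarith [bH m]
  refine ⟨fun l => ?_, fun k => ?_, fun m => H m tend / tend, hHdiv, ?_⟩
  · have hJ := (hgconv l).map_sum_le (t := Finset.range tend) (w := fun _ => 1 / (tend:ℝ)) (p := γ)
      (fun _ _ => by positivity) hw (fun τ _ => hγbox τ)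
    rw [hgam] at hJ
    have hJ2 : ∑ τ ∈ Finset.range tend, (1 / (tend:ℝ)) • g l (γ τ)
        = (∑ τ ∈ Finset.range tend, g l (γ τ)) / tend := by
      rw [Finset.sum_div]
      refine Finset.sum_congr rfl fun τ _ => ?_
      simp only [smul_eq_mul]; ring
    rw [hJ2] at hJ
    have hxe : ∀ m, (∑ τ ∈ Finset.range tend, xhat m (α τ) (ω τ)) / (tend:ℝ)
        = (∑ τ ∈ Finset.range tend, γ τ m) / tend + -(H m tend / tend) := by
      intro m; rw [tH]; ring
    have hlip := hglip l (fun m => (∑ τ ∈ Finset.range tend, γ τ m) / tend)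
      (fun m => -(H m tend / tend))
      (fun m => havg _ _ _ fun τ => hγbox τ m)
      (fun m => by
        rw [← hxe]
        exact havg _ _ _ fun τ => hA1x (ω τ) (α τ) (hα τ) m)
    have hfe : ((fun m => (∑ τ ∈ Finset.range tend, γ τ m) / (tend:ℝ))
        + fun m => -(H m tend / tend))
        = fun m => (∑ τ ∈ Finset.range tend, xhat m (α τ) (ω τ)) / (tend:ℝ) := by
      funext m; rw [hxe]; rfl
    rw [hfe] at hlip
    have hsum : ∑ m, β l m * |-(H m tend / tend)| ≤ R * ∑ m, β l m := by
      rw [Finset.mul_sum]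
      refine Finset.sum_le_sum fun m _ => ?_
      rw [abs_neg, mul_comm R]
      exact mul_le_mul_of_nonneg_left (hHdiv m) (hβ l m)
    have hz : (∑ τ ∈ Finset.range tend, yhat l (α τ) (ω τ)) / (tend:ℝ)
        + (∑ τ ∈ Finset.range tend, g l (γ τ)) / tend ≤ R := by
      rw [← add_div, div_le_iff₀ hn]
      linarith [tZ l tend, bZ l]
    linarith
  · rw [div_add' _ _ _ hn.ne', div_le_div_iff_of_pos_right hn]
    linarith [tQ k tend, bQ k]
  · have hmem := hX.sum_mem (t := Finset.range tend) (w := fun _ => 1 / (tend:ℝ)) (z := γ)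
      (fun _ _ => by positivity) hw (fun τ _ => hγX τ)
    rw [hgam] at hmem
    convert hmem using 1
    funext m
    simp only [Pi.add_apply]
    rw [tH]; ring
end

section
/- Suppose Assumptions A1 and A2 hold, V > 0, and a C-approximate policy is run against an arbitrary event sequence. For any positive integers T and R, with t_end = RT, the time averages over the first t_end slots satisfy: ȳ₀ + f(x̄) ≤ (1/R)Σ_{r=0}^{R−1} F_r^* + (B + C)/V + D(T − 1)/V + L(Θ(0))/(VRT) + Σ_{m=1}^M ν_m|H_m(RT) − H_m(0)|/(RT). Moreover, if all initial queue backlogs are 0, then the final term satisfies Σ_{m=1}^M ν_m|H_m(RT) − H_m(0)|/(RT) ≤ Σ_{m=1}^M ν_m C₀√(V/(RT)), where C₀ = √(2[(B + C)/V + (y₀^max − y₀^min) + (f^max − f^min)]). -/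
/-- `F_r^*`: the infimum cost achievable over the `r`-th frame of size `T` by a
`T`-slot lookahead policy that satisfies all constraints over the frame. -/
noncomputable def FrStar {Act Ω : Type*} {K M L : ℕ} (ω : ℕ → Ω) (A : Ω → Set Act)
    (ahat bhat : Fin K → Act → Ω → ℝ) (xhat : Fin M → Act → Ω → ℝ)
    (y0hat : Act → Ω → ℝ) (yhat : Fin L → Act → Ω → ℝ)
    (g : Fin L → (Fin M → ℝ) → ℝ) (f : (Fin M → ℝ) → ℝ)
    (X : Set (Fin M → ℝ)) (T r : ℕ) : ℝ :=
  sInf {c : ℝ | ∃ a : ℕ → Act,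
    (∀ τ ∈ Finset.Ico (r * T) ((r + 1) * T), a τ ∈ A (ω τ)) ∧
    (∀ l, (∑ τ ∈ Finset.Ico (r * T) ((r + 1) * T), yhat l (a τ) (ω τ)) / T
        + g l (fun m => (∑ τ ∈ Finset.Ico (r * T) ((r + 1) * T), xhat m (a τ) (ω τ)) / T)
        ≤ 0) ∧
    (fun m => (∑ τ ∈ Finset.Ico (r * T) ((r + 1) * T), xhat m (a τ) (ω τ)) / T) ∈ X ∧
    (∀ k, (∑ τ ∈ Finset.Ico (r * T) ((r + 1) * T),
        (ahat k (a τ) (ω τ) - bhat k (a τ) (ω τ))) / T ≤ 0) ∧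
    c = (∑ τ ∈ Finset.Ico (r * T) ((r + 1) * T), y0hat (a τ) (ω τ)) / T
        + f (fun m => (∑ τ ∈ Finset.Ico (r * T) ((r + 1) * T), xhat m (a τ) (ω τ)) / T)}

lemma aux_Qsq (q a b : ℝ) (hq : 0 ≤ q) (ha : 0 ≤ a) (hb : 0 ≤ b) :
    (max (q - b) 0 + a) ^ 2 ≤ q ^ 2 + (b ^ 2 + a ^ 2) + 2 * (q * (a - b)) := by
  rcases le_total (q - b) 0 with h | h
  · rw [max_eq_right h]
    nlinarith [mul_nonneg hq ha, sq_nonneg (q - b)]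
  · rw [max_eq_left h]
    nlinarith [mul_nonneg ha hb]

lemma aux_Zsq (z y : ℝ) : (max (z + y) 0) ^ 2 ≤ z ^ 2 + y ^ 2 + 2 * (z * y) := by
  rcases le_total (z + y) 0 with h | h
  · rw [max_eq_right h]
    nlinarith [sq_nonneg (z + y)]
  · rw [max_eq_left h]
    nlinarith

lemma aux_Qdiff (q a b : ℝ) (hq : 0 ≤ q) (ha : 0 ≤ a) (hb : 0 ≤ b) :
    |max (q - b) 0 + a - q| ≤ max b a := by
  rw [abs_le]
  rcases le_total (q - b) 0 with h | h
  · rw [max_eq_right h]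
    constructor <;> linarith [le_max_left b a, le_max_right b a]
  · rw [max_eq_left h]
    constructor <;> linarith [le_max_left b a, le_max_right b a]

lemma aux_Zdiff (z y : ℝ) (hz : 0 ≤ z) : |max (z + y) 0 - z| ≤ |y| := by
  rw [abs_le]
  rcases le_total (z + y) 0 with h | h
  · rw [max_eq_right h]
    constructor <;> linarith [neg_abs_le y, le_abs_self y, abs_nonneg y]
  · rw [max_eq_left h]
    constructor <;> linarith [neg_abs_le y, le_abs_self y]

lemma aux_slow (u : ℕ → ℝ) (c : ℝ) (h : ∀ t, |u (t + 1) - u t| ≤ c) (t i : ℕ) :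
    |u (t + i) - u t| ≤ i * c := by
  induction i with
  | zero => simp
  | succ n ih =>
    have h1 := h (t + n)
    have h2 := abs_add_le (u (t + n + 1) - u (t + n)) (u (t + n) - u t)
    have h3 : u (t + n + 1) - u (t + n) + (u (t + n) - u t) = u (t + (n + 1)) - u t := by
      rw [← add_assoc]; ring
    rw [h3] at h2
    push_cast
    linarith

lemma aux_slow_mul (u : ℕ → ℝ) (c : ℝ) (h : ∀ t, |u (t + 1) - u t| ≤ c) (t i : ℕ)
    (p q : ℝ) (hpq : |p| ≤ q) :
    u (t + i) * p ≤ u t * p + i * (c * q) := by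
  have h1 := aux_slow u c h t i
  have h2 : (u (t + i) - u t) * p ≤ (i * c) * q := by
    calc (u (t + i) - u t) * p ≤ |(u (t + i) - u t) * p| := le_abs_self _
      _ = |u (t + i) - u t| * |p| := abs_mul _ _
      _ ≤ (i * c) * q := mul_le_mul h1 hpq (abs_nonneg _) ((abs_nonneg _).trans h1)
  linarith

lemma aux_tri (T : ℕ) : 2 * ∑ i ∈ Finset.range T, (i : ℝ) = T * ((T : ℝ) - 1) := by
  induction T with
  | zero => simp
  | succ n ih => rw [Finset.sum_range_succ, mul_add, ih]; push_cast; ring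

lemma aux_avg_mem {M : ℕ} {S : Set (Fin M → ℝ)} (hS : Convex ℝ S) (n : ℕ) (hn : 0 < n)
    (x : ℕ → Fin M → ℝ) (hx : ∀ i, x i ∈ S) :
    (fun m => (∑ i ∈ Finset.range n, x i m) / (n : ℝ)) ∈ S := by
  have hn' : (0 : ℝ) < n := by exact_mod_cast hn
  have h := hS.sum_mem (t := Finset.range n) (w := fun _ => (1 / n : ℝ)) (z := x)
    (fun _ _ => by positivity) (by simp [hn'.ne']) (fun i _ => hx i)
  convert h using 1
  funext m
  simp [Finset.sum_apply, Finset.mul_sum, div_eq_inv_mul]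

lemma aux_jensen {M : ℕ} {S : Set (Fin M → ℝ)} {f : (Fin M → ℝ) → ℝ} (hS : ConvexOn ℝ S f)
    (n : ℕ) (hn : 0 < n)
    (x : ℕ → Fin M → ℝ) (hx : ∀ i, x i ∈ S) :
    f (fun m => (∑ i ∈ Finset.range n, x i m) / (n : ℝ))
      ≤ (∑ i ∈ Finset.range n, f (x i)) / n := by
  have hn' : (0 : ℝ) < n := by exact_mod_cast hn
  have h := hS.map_sum_le (t := Finset.range n) (w := fun _ => (1 / n : ℝ)) (p := x)
    (fun _ _ => by positivity) (by simp [hn'.ne']) (fun i _ => hx i)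
  have e : (fun m => (∑ i ∈ Finset.range n, x i m) / (n : ℝ))
      = ∑ i ∈ Finset.range n, (1 / n : ℝ) • x i := by
    funext m
    simp [Finset.sum_apply, Finset.mul_sum, div_eq_inv_mul]
  rw [e]
  refine h.trans (le_of_eq ?_)
  simp [Finset.mul_sum, div_eq_inv_mul]

lemma aux_box_convex {M : ℕ} (xmin xmax : Fin M → ℝ) :
    Convex ℝ {x : Fin M → ℝ | ∀ m, xmin m ≤ x m ∧ x m ≤ xmax m} := by
  have : {x : Fin M → ℝ | ∀ m, xmin m ≤ x m ∧ x m ≤ xmax m} = Set.Icc xmin xmax := by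
    ext x
    simp [Set.mem_Icc, Pi.le_def, forall_and]
  rw [this]
  exact convex_Icc _ _

/-- Theorem 1(c): under Assumptions A1 and A2, a `C`-approximate policy satisfies, for
any frame size `T` and number of frames `R` with `t_end = RT`,
`ȳ₀ + f(x̄) ≤ (1/R)Σ_r F_r^* + (B+C)/V + D(T−1)/V + L(Θ(0))/(VRT)
 + Σ_m ν_m|H_m(RT)−H_m(0)|/(RT)`, and if all queues start empty the final term is at
most `Σ_m ν_m C₀√(V/(RT))`. -/
theorem stmt_5
    {Ω Act : Type*} (ω : ℕ → Ω) (A : Ω → Set Act) (hAne : ∀ w, (A w).Nonempty)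
    (K M L : ℕ) (hK : 0 < K) (hM : 0 < M) (hL : 0 < L)
    (ahat bhat : Fin K → Act → Ω → ℝ) (xhat : Fin M → Act → Ω → ℝ)
    (y0hat : Act → Ω → ℝ) (yhat : Fin L → Act → Ω → ℝ)
    (amax bmax : Fin K → ℝ) (xmin xmax : Fin M → ℝ)
    (y0min y0max : ℝ) (ymin ymax : Fin L → ℝ)
    -- Assumption A1 (boundedness)
    (hA1a : ∀ (w : Ω) (a' : Act), a' ∈ A w → ∀ k, 0 ≤ ahat k a' w ∧ ahat k a' w ≤ amax k)
    (hA1b : ∀ (w : Ω) (a' : Act), a' ∈ A w → ∀ k, 0 ≤ bhat k a' w ∧ bhat k a' w ≤ bmax k)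
    (hA1x : ∀ (w : Ω) (a' : Act), a' ∈ A w → ∀ m, xmin m ≤ xhat m a' w ∧ xhat m a' w ≤ xmax m)
    (hA1y0 : ∀ (w : Ω) (a' : Act), a' ∈ A w → y0min ≤ y0hat a' w ∧ y0hat a' w ≤ y0max)
    (hA1y : ∀ (w : Ω) (a' : Act), a' ∈ A w → ∀ l, ymin l ≤ yhat l a' w ∧ yhat l a' w ≤ ymax l)
    -- the convex set X and the cost functions f, g_l on the box
    (X : Set (Fin M → ℝ)) (hX : Convex ℝ X)
    (f : (Fin M → ℝ) → ℝ) (g : Fin L → (Fin M → ℝ) → ℝ)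
    (fmin fmax : ℝ) (gmin gmax : Fin L → ℝ) (ν : Fin M → ℝ)
    (hν : ∀ m, 0 ≤ ν m)
    (hfconv : ConvexOn ℝ {x : Fin M → ℝ | ∀ m, xmin m ≤ x m ∧ x m ≤ xmax m} f)
    (hfcont : ContinuousOn f {x : Fin M → ℝ | ∀ m, xmin m ≤ x m ∧ x m ≤ xmax m})
    (hfbd : ∀ x ∈ {x : Fin M → ℝ | ∀ m, xmin m ≤ x m ∧ x m ≤ xmax m},
      fmin ≤ f x ∧ f x ≤ fmax)
    (hflip : ∀ (x y : Fin M → ℝ),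
      (∀ m, xmin m ≤ x m ∧ x m ≤ xmax m) →
      (∀ m, xmin m ≤ x m + y m ∧ x m + y m ≤ xmax m) →
      f (x + y) ≤ f x + ∑ m, ν m * |y m|)
    (hgconv : ∀ l, ConvexOn ℝ {x : Fin M → ℝ | ∀ m, xmin m ≤ x m ∧ x m ≤ xmax m} (g l))
    (hgcont : ∀ l, ContinuousOn (g l) {x : Fin M → ℝ | ∀ m, xmin m ≤ x m ∧ x m ≤ xmax m})
    (hgbd : ∀ l, ∀ x ∈ {x : Fin M → ℝ | ∀ m, xmin m ≤ x m ∧ x m ≤ xmax m},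
      gmin l ≤ g l x ∧ g l x ≤ gmax l)
    -- Assumption A2
    (hA2 : ∀ t, ∃ a' ∈ A (ω t),
      (∀ l, yhat l a' (ω t) + g l (fun m => xhat m a' (ω t)) ≤ 0) ∧
      (∀ k, ahat k a' (ω t) ≤ bhat k a' (ω t)) ∧
      (fun m => xhat m a' (ω t)) ∈ X)
    -- parameters
    (V C B D : ℝ) (hV : 0 < V) (hC : 0 ≤ C)
    (hB : ∀ (t : ℕ) (a' : Act) (γ' : Fin M → ℝ), a' ∈ A (ω t) → γ' ∈ X →
      (∀ m, xmin m ≤ γ' m ∧ γ' m ≤ xmax m) →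
      (1 / 2) * ∑ l, (yhat l a' (ω t) + g l γ') ^ 2
        + (1 / 2) * ∑ k, ((bhat k a' (ω t)) ^ 2 + (ahat k a' (ω t)) ^ 2)
        + (1 / 2) * ∑ m, (γ' m - xhat m a' (ω t)) ^ 2 ≤ B)
    (hD : ∀ (t : ℕ) (a' : Act) (γ' : Fin M → ℝ), a' ∈ A (ω t) → γ' ∈ X →
      (∀ m, xmin m ≤ γ' m ∧ γ' m ≤ xmax m) →
      (1 / 2) * ∑ l, max (|ymax l + gmax l|) (|ymin l + gmin l|)
          * |yhat l a' (ω t) + g l γ'|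
        + ∑ m, (xmax m - xmin m) * |xhat m a' (ω t) - γ' m|
        + (1 / 2) * ∑ k, max (bmax k) (amax k)
          * max (bhat k a' (ω t)) (ahat k a' (ω t)) ≤ D)
    -- the C-approximate policy and the queues
    (α : ℕ → Act) (γ : ℕ → Fin M → ℝ)
    (hα : ∀ t, α t ∈ A (ω t)) (hγX : ∀ t, γ t ∈ X)
    (hγbox : ∀ t m, xmin m ≤ γ t m ∧ γ t m ≤ xmax m)
    (Q : Fin K → ℕ → ℝ) (Z : Fin L → ℕ → ℝ) (H : Fin M → ℕ → ℝ)
    (hQ0 : ∀ k, 0 ≤ Q k 0) (hZ0 : ∀ l, 0 ≤ Z l 0)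
    (hQ : ∀ k t, Q k (t + 1) = max (Q k t - bhat k (α t) (ω t)) 0 + ahat k (α t) (ω t))
    (hZ : ∀ l t, Z l (t + 1) = max (Z l t + yhat l (α t) (ω t) + g l (γ t)) 0)
    (hH : ∀ m t, H m (t + 1) = H m t + γ t m - xhat m (α t) (ω t))
    (hCapprox : ∀ (t : ℕ) (a' : Act) (γ' : Fin M → ℝ), a' ∈ A (ω t) → γ' ∈ X →
      (∀ m, xmin m ≤ γ' m ∧ γ' m ≤ xmax m) →
      driftExpr ahat bhat xhat y0hat yhat g f V (ω t)
          (fun l => Z l t) (fun k => Q k t) (fun m => H m t) (α t) (γ t)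
        ≤ driftExpr ahat bhat xhat y0hat yhat g f V (ω t)
          (fun l => Z l t) (fun k => Q k t) (fun m => H m t) a' γ' + C)
    -- the Lyapunov function and the constant C₀
    (Ly : ℕ → ℝ)
    (hLy : ∀ t, Ly t = (1 / 2) * ∑ l, (Z l t) ^ 2 + (1 / 2) * ∑ k, (Q k t) ^ 2
        + (1 / 2) * ∑ m, (H m t) ^ 2)
    (C₀ : ℝ)
    (hC₀ : C₀ = Real.sqrt (2 * ((B + C) / V + (y0max - y0min) + (fmax - fmin))))
    -- frames
    (T R : ℕ) (hT : 0 < T) (hR : 0 < R) :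
    ((∑ τ ∈ Finset.range (R * T), y0hat (α τ) (ω τ)) / (R * T)
        + f (fun m => (∑ τ ∈ Finset.range (R * T), xhat m (α τ) (ω τ)) / (R * T))
      ≤ (∑ r ∈ Finset.range R,
            FrStar ω A ahat bhat xhat y0hat yhat g f X T r) / R
        + (B + C) / V + D * ((T : ℝ) - 1) / V + Ly 0 / (V * R * T)
        + ∑ m, ν m * |H m (R * T) - H m 0| / (R * T)) ∧
    (((∀ l, Z l 0 = 0) ∧ (∀ k, Q k 0 = 0) ∧ (∀ m, H m 0 = 0)) →
      ∑ m, ν m * |H m (R * T) - H m 0| / (R * T)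
        ≤ ∑ m, ν m * C₀ * Real.sqrt (V / (R * T))) := by
  have hbox := aux_box_convex xmin xmax
  have hTp : (0 : ℝ) < T := by exact_mod_cast hT
  have hRp : (0 : ℝ) < R := by exact_mod_cast hR
  have hQn : ∀ k t, 0 ≤ Q k t := by
    intro k t
    cases t with
    | zero => exact hQ0 k
    | succ n =>
      rw [hQ]
      exact add_nonneg (le_max_right _ _) (hA1a _ _ (hα n) k).1
  have hZn : ∀ l t, 0 ≤ Z l t := by
    intro l t
    cases t with
    | zero => exact hZ0 l
    | succ n => rw [hZ]; exact le_max_right _ _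
  have hLyn : ∀ t, 0 ≤ Ly t := by
    intro t
    rw [hLy]
    have h1 : 0 ≤ ∑ l, (Z l t) ^ 2 := Finset.sum_nonneg fun _ _ => sq_nonneg _
    have h2 : 0 ≤ ∑ l, (Q l t) ^ 2 := Finset.sum_nonneg fun _ _ => sq_nonneg _
    have h3 : 0 ≤ ∑ l, (H l t) ^ 2 := Finset.sum_nonneg fun _ _ => sq_nonneg _
    linarith
  -- one-slot drift bound
  have hdrift : ∀ t, Ly (t + 1) - Ly t + V * (y0hat (α t) (ω t) + f (γ t)) ≤
      B + driftExpr ahat bhat xhat y0hat yhat g f V (ω t)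
          (fun l => Z l t) (fun k => Q k t) (fun m => H m t) (α t) (γ t) := by
    intro t
    have hB' := hB t (α t) (γ t) (hα t) (hγX t) (hγbox t)
    have h1 : ∑ l, (Z l (t + 1)) ^ 2 ≤ ∑ l, (Z l t) ^ 2
        + ∑ l, (yhat l (α t) (ω t) + g l (γ t)) ^ 2
        + 2 * ∑ l, Z l t * (yhat l (α t) (ω t) + g l (γ t)) := by
      rw [Finset.mul_sum, ← Finset.sum_add_distrib, ← Finset.sum_add_distrib]
      refine Finset.sum_le_sum fun l _ => ?_
      rw [hZ, add_assoc]
      exact aux_Zsq _ _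
    have h2 : ∑ k, (Q k (t + 1)) ^ 2 ≤ ∑ k, (Q k t) ^ 2
        + ∑ k, ((bhat k (α t) (ω t)) ^ 2 + (ahat k (α t) (ω t)) ^ 2)
        + 2 * ∑ k, Q k t * (ahat k (α t) (ω t) - bhat k (α t) (ω t)) := by
      rw [Finset.mul_sum, ← Finset.sum_add_distrib, ← Finset.sum_add_distrib]
      refine Finset.sum_le_sum fun k _ => ?_
      rw [hQ]
      exact aux_Qsq _ _ _ (hQn k t) (hA1a _ _ (hα t) k).1 (hA1b _ _ (hα t) k).1
    have h3 : ∑ m, (H m (t + 1)) ^ 2 = ∑ m, (H m t) ^ 2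
        + ∑ m, (γ t m - xhat m (α t) (ω t)) ^ 2
        + 2 * ∑ m, H m t * (γ t m - xhat m (α t) (ω t)) := by
      rw [Finset.mul_sum, ← Finset.sum_add_distrib, ← Finset.sum_add_distrib]
      refine Finset.sum_congr rfl fun m _ => ?_
      rw [hH]
      ring
    rw [hLy, hLy]
    unfold driftExpr
    linarith
  -- slow variation of the queues
  have hZs : ∀ l t, |Z l (t + 1) - Z l t| ≤ max (|ymax l + gmax l|) (|ymin l + gmin l|) := by
    intro l t
    rw [hZ, add_assoc]
    refine (aux_Zdiff _ _ (hZn l t)).trans ?_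
    have hy := hA1y _ _ (hα t) l
    have hg := hgbd l (γ t) (hγbox t)
    rw [max_comm]
    exact abs_le_max_abs_abs (add_le_add hy.1 hg.1) (add_le_add hy.2 hg.2)
  have hQs : ∀ k t, |Q k (t + 1) - Q k t| ≤ max (bmax k) (amax k) := by
    intro k t
    rw [hQ]
    have ha := hA1a _ _ (hα t) k
    have hb := hA1b _ _ (hα t) k
    exact (aux_Qdiff _ _ _ (hQn k t) ha.1 hb.1).trans (max_le_max hb.2 ha.2)
  have hHs : ∀ m t, |H m (t + 1) - H m t| ≤ xmax m - xmin m := by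
    intro m t
    rw [hH, abs_le]
    have h1 := hA1x _ _ (hα t) m
    have h2 := hγbox t m
    constructor <;> linarith
  -- slot bound against the queues at the start of a frame
  have hslot : ∀ (t i : ℕ) (a' : Act) (γ' : Fin M → ℝ), a' ∈ A (ω (t + i)) → γ' ∈ X →
      (∀ m, xmin m ≤ γ' m ∧ γ' m ≤ xmax m) →
      Ly (t + i + 1) - Ly (t + i) + V * (y0hat (α (t + i)) (ω (t + i)) + f (γ (t + i))) ≤
      B + C + V * y0hat a' (ω (t + i)) + V * f γ'
      + ∑ l, Z l t * (yhat l a' (ω (t + i)) + g l γ')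
      + ∑ k, Q k t * (ahat k a' (ω (t + i)) - bhat k a' (ω (t + i)))
      + ∑ m, H m t * (γ' m - xhat m a' (ω (t + i))) + (i : ℝ) * (2 * D) := by
    intro t i a' γ' ha' hX' hb'
    have h0 := hdrift (t + i)
    have h1 := hCapprox (t + i) a' γ' ha' hX' hb'
    have hD' := hD (t + i) a' γ' ha' hX' hb'
    have hz : ∑ l, Z l (t + i) * (yhat l a' (ω (t + i)) + g l γ')
        ≤ ∑ l, Z l t * (yhat l a' (ω (t + i)) + g l γ')
        + i * ∑ l, max (|ymax l + gmax l|) (|ymin l + gmin l|)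
          * |yhat l a' (ω (t + i)) + g l γ'| := by
      rw [Finset.mul_sum, ← Finset.sum_add_distrib]
      exact Finset.sum_le_sum fun l _ => aux_slow_mul (Z l) _ (hZs l) t i _ _ le_rfl
    have hq : ∑ k, Q k (t + i) * (ahat k a' (ω (t + i)) - bhat k a' (ω (t + i)))
        ≤ ∑ k, Q k t * (ahat k a' (ω (t + i)) - bhat k a' (ω (t + i)))
        + i * ∑ k, max (bmax k) (amax k)
          * max (bhat k a' (ω (t + i))) (ahat k a' (ω (t + i))) := by
      rw [Finset.mul_sum, ← Finset.sum_add_distrib]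
      refine Finset.sum_le_sum fun k _ => aux_slow_mul (Q k) _ (hQs k) t i _ _ ?_
      have ha := (hA1a _ _ ha' k).1
      have hb := (hA1b _ _ ha' k).1
      rw [abs_le]
      constructor <;>
        linarith [le_max_left (bhat k a' (ω (t + i))) (ahat k a' (ω (t + i))),
          le_max_right (bhat k a' (ω (t + i))) (ahat k a' (ω (t + i)))]
    have hh : ∑ m, H m (t + i) * (γ' m - xhat m a' (ω (t + i)))
        ≤ ∑ m, H m t * (γ' m - xhat m a' (ω (t + i)))
        + i * ∑ m, (xmax m - xmin m) * |xhat m a' (ω (t + i)) - γ' m| := by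
      rw [Finset.mul_sum, ← Finset.sum_add_distrib]
      exact Finset.sum_le_sum fun m _ =>
        aux_slow_mul (H m) _ (hHs m) t i _ _ (abs_sub_comm _ _).le
    have hi : (i : ℝ) * (∑ l, max (|ymax l + gmax l|) (|ymin l + gmin l|)
          * |yhat l a' (ω (t + i)) + g l γ'|)
        + i * (∑ k, max (bmax k) (amax k)
          * max (bhat k a' (ω (t + i))) (ahat k a' (ω (t + i))))
        + i * (∑ m, (xmax m - xmin m) * |xhat m a' (ω (t + i)) - γ' m|) ≤ i * (2 * D) := by
      rw [← mul_add, ← mul_add]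
      refine mul_le_mul_of_nonneg_left ?_ (Nat.cast_nonneg i)
      have hx0 : 0 ≤ ∑ m, (xmax m - xmin m) * |xhat m a' (ω (t + i)) - γ' m| :=
        Finset.sum_nonneg fun m _ => mul_nonneg
          (by linarith [(hb' m).1, (hb' m).2]) (abs_nonneg _)
      linarith
    unfold driftExpr at h0 h1
    linarith
  choose a2 ha2 ha2g ha2q ha2X using hA2
  -- frame bound
  have hframe : ∀ r : ℕ, Ly (r * T + T) - Ly (r * T)
      + V * ∑ i ∈ Finset.range T,
          (y0hat (α (r * T + i)) (ω (r * T + i)) + f (γ (r * T + i)))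
      ≤ (B + C) * T + V * T * FrStar ω A ahat bhat xhat y0hat yhat g f X T r
        + D * (T * ((T : ℝ) - 1)) := by
    intro r
    have hico : ∀ F : ℕ → ℝ, ∑ τ ∈ Finset.Ico (r * T) ((r + 1) * T), F τ
        = ∑ i ∈ Finset.range T, F (r * T + i) := by
      intro F
      rw [Finset.sum_Ico_eq_sum_range]
      congr 2
      rw [add_mul, one_mul, Nat.add_sub_cancel_left]
    suffices hs : (Ly (r * T + T) - Ly (r * T)
      + V * ∑ i ∈ Finset.range T,
          (y0hat (α (r * T + i)) (ω (r * T + i)) + f (γ (r * T + i)))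
      - (B + C) * T - D * (T * ((T : ℝ) - 1))) / (V * T)
        ≤ FrStar ω A ahat bhat xhat y0hat yhat g f X T r by
      rw [div_le_iff₀ (by positivity)] at hs
      linarith
    unfold FrStar
    refine le_csInf ?_ ?_
    · refine ⟨_, a2, fun τ _ => ha2 τ, ?_, ?_, ?_, rfl⟩
      · intro l
        simp only [hico]
        have hj := aux_jensen (hgconv l) T hT
          (fun i m => xhat m (a2 (r * T + i)) (ω (r * T + i)))
          (fun i m => hA1x _ _ (ha2 _) m)
        refine (add_le_add_right hj _).trans ?_
        rw [← add_div, ← Finset.sum_add_distrib]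
        exact div_nonpos_of_nonpos_of_nonneg
          (Finset.sum_nonpos fun i _ => ha2g _ l) hTp.le
      · simp only [hico]
        exact aux_avg_mem hX T hT
          (fun i m => xhat m (a2 (r * T + i)) (ω (r * T + i))) (fun i => ha2X _)
      · intro k
        exact div_nonpos_of_nonpos_of_nonneg
          (Finset.sum_nonpos fun i _ => by linarith [ha2q i k]) hTp.le
    · rintro c ⟨a, haA, hag, haX, haq, rfl⟩
      have haA' : ∀ i ∈ Finset.range T, a (r * T + i) ∈ A (ω (r * T + i)) := by
        intro i hi
        apply haA
        rw [Finset.mem_Ico, add_mul, one_mul]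
        have := Finset.mem_range.1 hi
        omega
      simp only [hico] at hag haX haq ⊢
      set γ' : Fin M → ℝ := fun m =>
        (∑ i ∈ Finset.range T, xhat m (a (r * T + i)) (ω (r * T + i))) / T with hγ'
      have hbx : ∀ m, xmin m ≤ γ' m ∧ γ' m ≤ xmax m := by
        intro m
        have h1 := Finset.sum_le_sum fun i hi => (hA1x _ _ (haA' i hi) m).1
        have h2 := Finset.sum_le_sum fun i hi => (hA1x _ _ (haA' i hi) m).2
        simp only [Finset.sum_const, Finset.card_range, nsmul_eq_mul] at h1 h2
        constructor
        · rw [hγ', le_div_iff₀ hTp]; linarith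
        · rw [hγ', div_le_iff₀ hTp]; linarith
      have hsum := Finset.sum_le_sum fun i hi =>
        hslot (r * T) i (a (r * T + i)) γ' (haA' i hi) haX hbx
      have htel := Finset.sum_range_sub (fun i => Ly (r * T + i)) T
      simp only [← add_assoc, add_zero] at htel
      simp only [Finset.sum_add_distrib, Finset.sum_const, Finset.card_range, nsmul_eq_mul,
        ← Finset.mul_sum, ← Finset.sum_mul] at hsum
      rw [htel] at hsum
      have hz : ∑ i ∈ Finset.range T, ∑ l, Z l (r * T) *
          (yhat l (a (r * T + i)) (ω (r * T + i)) + g l γ') ≤ 0 := by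
        rw [Finset.sum_comm]
        refine Finset.sum_nonpos fun l _ => ?_
        rw [← Finset.mul_sum]
        refine mul_nonpos_of_nonneg_of_nonpos (hZn _ _) ?_
        have := hag l
        rw [div_add' _ _ _ hTp.ne', div_le_iff₀ hTp, zero_mul] at this
        rw [Finset.sum_add_distrib]
        simp only [Finset.sum_const, Finset.card_range, nsmul_eq_mul]
        linarith
      have hq : ∑ i ∈ Finset.range T, ∑ k, Q k (r * T) *
          (ahat k (a (r * T + i)) (ω (r * T + i))
            - bhat k (a (r * T + i)) (ω (r * T + i))) ≤ 0 := by
        rw [Finset.sum_comm]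
        refine Finset.sum_nonpos fun k _ => ?_
        rw [← Finset.mul_sum]
        refine mul_nonpos_of_nonneg_of_nonpos (hQn _ _) ?_
        have := haq k
        rwa [div_le_iff₀ hTp, zero_mul] at this
      have hh : ∑ i ∈ Finset.range T, ∑ m, H m (r * T) *
          (γ' m - xhat m (a (r * T + i)) (ω (r * T + i))) = 0 := by
        rw [Finset.sum_comm]
        refine Finset.sum_eq_zero fun m _ => ?_
        rw [← Finset.mul_sum, Finset.sum_sub_distrib]
        simp only [Finset.sum_const, Finset.card_range, nsmul_eq_mul, hγ']
        rw [mul_div_cancel₀ _ hTp.ne', sub_self, mul_zero]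
      have htri := aux_tri T
      have htri' : (∑ i ∈ Finset.range T, (i : ℝ)) * (2 * D) = D * (T * ((T : ℝ) - 1)) := by
        rw [← htri]; ring
      rw [div_le_iff₀ (by positivity)]
      have hrhs : ((∑ i ∈ Finset.range T, y0hat (a (r * T + i)) (ω (r * T + i))) / T + f γ')
          * (V * T) = V * ∑ i ∈ Finset.range T, y0hat (a (r * T + i)) (ω (r * T + i))
            + T * (V * f γ') := by
        field_simp
      rw [hrhs]
      rw [Finset.sum_add_distrib]
      linarith
  have htotal : ∀ n : ℕ, Ly (n * T) - Ly 0
      + V * ∑ τ ∈ Finset.range (n * T), (y0hat (α τ) (ω τ) + f (γ τ))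
      ≤ n * ((B + C) * T) + V * T * ∑ r ∈ Finset.range n,
          FrStar ω A ahat bhat xhat y0hat yhat g f X T r
        + n * (D * (T * ((T : ℝ) - 1))) := by
    intro n
    induction n with
    | zero => simp
    | succ n ih =>
      have h := hframe n
      rw [add_mul, one_mul, Finset.sum_range_add, Finset.sum_range_succ]
      push_cast
      linarith
  have hRT : 0 < R * T := Nat.mul_pos hR hT
  have hHtel : ∀ m n, H m n - H m 0
      = ∑ τ ∈ Finset.range n, γ τ m - ∑ τ ∈ Finset.range n, xhat m (α τ) (ω τ) := by
    intro m n
    induction n with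
    | zero => simp
    | succ n ih => rw [Finset.sum_range_succ, Finset.sum_range_succ, hH]; linarith
  refine ⟨?_, ?_⟩
  · have h1 := htotal R
    have hj := aux_jensen hfconv (R * T) hRT γ (fun i => hγbox i)
    have hgm := aux_avg_mem hbox (R * T) hRT γ (fun i => hγbox i)
    have hxm := aux_avg_mem hbox (R * T) hRT (fun i m => xhat m (α i) (ω i))
      (fun i m => hA1x _ _ (hα i) m)
    push_cast at hj hgm hxm
    set gb : Fin M → ℝ := fun m => (∑ i ∈ Finset.range (R * T), γ i m) / ((R : ℝ) * T) with hgb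
    set xb : Fin M → ℝ := fun m =>
      (∑ i ∈ Finset.range (R * T), xhat m (α i) (ω i)) / ((R : ℝ) * T) with hxb
    have hl := hflip gb (xb - gb) hgm (by
      intro m
      have := hxm m
      simpa using this)
    rw [add_sub_cancel] at hl
    have hl2 : ∑ m, ν m * |(xb - gb) m| = ∑ m, ν m * |H m (R * T) - H m 0| / (R * T) := by
      refine Finset.sum_congr rfl fun m _ => ?_
      rw [hHtel, Pi.sub_apply, hgb, hxb]
      simp only
      rw [← sub_div, abs_div, abs_sub_comm, abs_of_pos (by positivity : (0 : ℝ) < R * T),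
        mul_div_assoc]
    rw [hl2] at hl
    have h2 : (∑ τ ∈ Finset.range (R * T), y0hat (α τ) (ω τ)) / (R * T)
        + (∑ τ ∈ Finset.range (R * T), f (γ τ)) / (R * T)
        ≤ (∑ r ∈ Finset.range R,
            FrStar ω A ahat bhat xhat y0hat yhat g f X T r) / R
        + (B + C) / V + D * ((T : ℝ) - 1) / V + Ly 0 / (V * R * T) := by
      have hn := hLyn (R * T)
      rw [Finset.sum_add_distrib] at h1
      have hc : (0 : ℝ) < V * R * T := by positivity
      refine le_of_mul_le_mul_left ?_ hc
      have e1 : V * R * T * ((∑ τ ∈ Finset.range (R * T), y0hat (α τ) (ω τ)) / (R * T)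
        + (∑ τ ∈ Finset.range (R * T), f (γ τ)) / (R * T))
        = V * (∑ τ ∈ Finset.range (R * T), y0hat (α τ) (ω τ)
          + ∑ τ ∈ Finset.range (R * T), f (γ τ)) := by
        field_simp
      have e2 : V * R * T * ((∑ r ∈ Finset.range R,
            FrStar ω A ahat bhat xhat y0hat yhat g f X T r) / R
        + (B + C) / V + D * ((T : ℝ) - 1) / V + Ly 0 / (V * R * T))
        = R * ((B + C) * T) + V * T * ∑ r ∈ Finset.range R,
          FrStar ω A ahat bhat xhat y0hat yhat g f X T r
        + R * (D * (T * ((T : ℝ) - 1))) + Ly 0 := by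
        field_simp
        ring
      rw [e1, e2]
      linarith
    linarith
  · rintro ⟨hz0, hq0, hh0⟩
    have hLy0 : Ly 0 = 0 := by rw [hLy]; simp [hz0, hq0, hh0]
    set W : ℝ := (B + C) / V + (y0max - y0min) + (fmax - fmin) with hW
    have hVW : V * W = B + C + V * (y0max - y0min) + V * (fmax - fmin) := by
      rw [hW]; field_simp
    have hstep : ∀ t, Ly (t + 1) - Ly t ≤ V * W := by
      intro t
      have h0 := hdrift t
      have hx2 := hA1x _ _ (ha2 t)
      have h1 := hCapprox t (a2 t) (fun m => xhat m (a2 t) (ω t)) (ha2 t) (ha2X t) hx2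
      have hz : ∑ l, Z l t * (yhat l (a2 t) (ω t)
          + g l (fun m => xhat m (a2 t) (ω t))) ≤ 0 :=
        Finset.sum_nonpos fun l _ => mul_nonpos_of_nonneg_of_nonpos (hZn _ _) (ha2g t l)
      have hq : ∑ k, Q k t * (ahat k (a2 t) (ω t) - bhat k (a2 t) (ω t)) ≤ 0 :=
        Finset.sum_nonpos fun k _ => mul_nonpos_of_nonneg_of_nonpos (hQn _ _)
          (by linarith [ha2q t k])
      have hy1 := mul_le_mul_of_nonneg_left (hA1y0 _ _ (ha2 t)).2 hV.le
      have hy2 := mul_le_mul_of_nonneg_left (hA1y0 _ _ (hα t)).1 hV.le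
      have hf1 := mul_le_mul_of_nonneg_left
        (hfbd (fun m => xhat m (a2 t) (ω t)) hx2).2 hV.le
      have hf2 := mul_le_mul_of_nonneg_left (hfbd (γ t) (hγbox t)).1 hV.le
      rw [hVW]
      have e : driftExpr ahat bhat xhat y0hat yhat g f V (ω t)
          (fun l => Z l t) (fun k => Q k t) (fun m => H m t) (a2 t)
            (fun m => xhat m (a2 t) (ω t)) ≤ V * y0max + V * fmax := by
        unfold driftExpr
        simp only [sub_self, mul_zero, Finset.sum_const_zero]
        linarith
      linarith
    have hLyb : ∀ n : ℕ, Ly n ≤ n * (V * W) := by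
      intro n
      induction n with
      | zero => simp [hLy0]
      | succ n ih => push_cast; linarith [hstep n]
    have hn : (0 : ℝ) < R * T := by positivity
    refine Finset.sum_le_sum fun m _ => ?_
    rw [mul_div_assoc, mul_assoc]
    refine mul_le_mul_of_nonneg_left ?_ (hν m)
    have hHL : (H m (R * T)) ^ 2 ≤ 2 * Ly (R * T) := by
      rw [hLy]
      have h1 : 0 ≤ ∑ l, (Z l (R * T)) ^ 2 := Finset.sum_nonneg fun _ _ => sq_nonneg _
      have h2 : 0 ≤ ∑ l, (Q l (R * T)) ^ 2 := Finset.sum_nonneg fun _ _ => sq_nonneg _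
      have h3 := Finset.single_le_sum (f := fun m => (H m (R * T)) ^ 2)
        (fun _ _ => sq_nonneg _) (Finset.mem_univ m)
      linarith
    have hb := hLyb (R * T)
    push_cast at hb
    have hW0 : 0 ≤ W := by
      have h1 : 0 ≤ R * T * (V * W) := (hLyn _).trans hb
      have h2 : 0 < (R : ℝ) * T * V := by positivity
      rw [← mul_assoc] at h1
      exact nonneg_of_mul_nonneg_right h1 h2
    rw [hC₀, ← Real.sqrt_mul (by positivity), hh0, sub_zero]
    apply Real.le_sqrt_of_sq_le
    rw [div_pow, sq_abs, div_le_iff₀ (by positivity)]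
    have e : 2 * W * (V / (R * T)) * ((R : ℝ) * T) ^ 2 = 2 * (R * T * (V * W)) := by
      field_simp
    rw [e]
    linarith
end

section
/- For any initial time t₀, any queue values Θ(t₀), any integer T > 1, and any collection of C-approximate decisions implemented over the interval τ ∈ {t₀,…,t₀+T−1}: Δ_T(t₀) + Σ_{τ=t₀}^{t₀+T−1} [V ŷ₀(α(τ),ω(τ)) + V f(γ(τ))] ≤ BT + CT + DT(T−1) + Σ_τ [V ŷ₀(α*(τ),ω(τ)) + V f(γ*(τ))] + Σ_{l=1}^L Z_l(t₀) Σ_τ [ŷ_l(α*(τ),ω(τ)) + g_l(γ*(τ))] + Σ_{k=1}^K Q_k(t₀) Σ_τ [â_k(α*(τ),ω(τ)) − b̂_k(α*(τ),ω(τ))] + Σ_{m=1}^M H_m(t₀) Σ_τ [γ*_m(τ) − x̂_m(α*(τ),ω(τ))], for any alternative decisions α*(τ) ∈ A_{ω(τ)} and γ*(τ) ∈ X (with x_m^min ≤ γ*_m(τ) ≤ x_m^max) over τ ∈ {t₀,…,t₀+T−1}. -/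
/-- Lemma 3 (`T`-slot drift bound for `C`-approximate decisions): for any start time
`t₀`, any queue values `Θ(t₀)`, any integer `T > 1`, and any `C`-approximate decisions
over `τ ∈ {t₀,…,t₀+T−1}`, the `T`-slot drift plus accumulated penalty is bounded by
`BT + CT + DT(T−1)` plus the corresponding terms of any alternative feasible decision
sequence, with queue values frozen at time `t₀`. -/
theorem stmt_6
    {Ω Act : Type*} (ω : ℕ → Ω) (A : Ω → Set Act) (hAne : ∀ w, (A w).Nonempty)
    (K M L : ℕ) (hK : 0 < K) (hM : 0 < M) (hL : 0 < L)
    (ahat bhat : Fin K → Act → Ω → ℝ) (xhat : Fin M → Act → Ω → ℝ)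
    (y0hat : Act → Ω → ℝ) (yhat : Fin L → Act → Ω → ℝ)
    (amax bmax : Fin K → ℝ) (xmin xmax : Fin M → ℝ)
    (y0min y0max : ℝ) (ymin ymax : Fin L → ℝ)
    -- Assumption A1 (boundedness)
    (hA1a : ∀ (w : Ω) (a' : Act), a' ∈ A w → ∀ k, 0 ≤ ahat k a' w ∧ ahat k a' w ≤ amax k)
    (hA1b : ∀ (w : Ω) (a' : Act), a' ∈ A w → ∀ k, 0 ≤ bhat k a' w ∧ bhat k a' w ≤ bmax k)
    (hA1x : ∀ (w : Ω) (a' : Act), a' ∈ A w → ∀ m, xmin m ≤ xhat m a' w ∧ xhat m a' w ≤ xmax m)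
    (hA1y0 : ∀ (w : Ω) (a' : Act), a' ∈ A w → y0min ≤ y0hat a' w ∧ y0hat a' w ≤ y0max)
    (hA1y : ∀ (w : Ω) (a' : Act), a' ∈ A w → ∀ l, ymin l ≤ yhat l a' w ∧ yhat l a' w ≤ ymax l)
    -- the convex set X and the cost functions f, g_l on the box
    (X : Set (Fin M → ℝ)) (hX : Convex ℝ X)
    (f : (Fin M → ℝ) → ℝ) (g : Fin L → (Fin M → ℝ) → ℝ)
    (gmin gmax : Fin L → ℝ)
    (hfconv : ConvexOn ℝ {x : Fin M → ℝ | ∀ m, xmin m ≤ x m ∧ x m ≤ xmax m} f)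
    (hfcont : ContinuousOn f {x : Fin M → ℝ | ∀ m, xmin m ≤ x m ∧ x m ≤ xmax m})
    (hgconv : ∀ l, ConvexOn ℝ {x : Fin M → ℝ | ∀ m, xmin m ≤ x m ∧ x m ≤ xmax m} (g l))
    (hgcont : ∀ l, ContinuousOn (g l) {x : Fin M → ℝ | ∀ m, xmin m ≤ x m ∧ x m ≤ xmax m})
    (hgbd : ∀ l, ∀ x ∈ {x : Fin M → ℝ | ∀ m, xmin m ≤ x m ∧ x m ≤ xmax m},
      gmin l ≤ g l x ∧ g l x ≤ gmax l)
    -- parameters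
    (V C B D : ℝ) (hV : 0 ≤ V) (hC : 0 ≤ C)
    (hB : ∀ (t : ℕ) (a' : Act) (γ' : Fin M → ℝ), a' ∈ A (ω t) → γ' ∈ X →
      (∀ m, xmin m ≤ γ' m ∧ γ' m ≤ xmax m) →
      (1 / 2) * ∑ l, (yhat l a' (ω t) + g l γ') ^ 2
        + (1 / 2) * ∑ k, ((bhat k a' (ω t)) ^ 2 + (ahat k a' (ω t)) ^ 2)
        + (1 / 2) * ∑ m, (γ' m - xhat m a' (ω t)) ^ 2 ≤ B)
    (hD : ∀ (t : ℕ) (a' : Act) (γ' : Fin M → ℝ), a' ∈ A (ω t) → γ' ∈ X →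
      (∀ m, xmin m ≤ γ' m ∧ γ' m ≤ xmax m) →
      (1 / 2) * ∑ l, max (|ymax l + gmax l|) (|ymin l + gmin l|)
          * |yhat l a' (ω t) + g l γ'|
        + ∑ m, (xmax m - xmin m) * |xhat m a' (ω t) - γ' m|
        + (1 / 2) * ∑ k, max (bmax k) (amax k)
          * max (bhat k a' (ω t)) (ahat k a' (ω t)) ≤ D)
    -- the policy and the queues
    (α : ℕ → Act) (γ : ℕ → Fin M → ℝ)
    (hα : ∀ t, α t ∈ A (ω t)) (hγX : ∀ t, γ t ∈ X)
    (hγbox : ∀ t m, xmin m ≤ γ t m ∧ γ t m ≤ xmax m)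
    (Q : Fin K → ℕ → ℝ) (Z : Fin L → ℕ → ℝ) (H : Fin M → ℕ → ℝ)
    (hQ0 : ∀ k, 0 ≤ Q k 0) (hZ0 : ∀ l, 0 ≤ Z l 0)
    (hQ : ∀ k t, Q k (t + 1) = max (Q k t - bhat k (α t) (ω t)) 0 + ahat k (α t) (ω t))
    (hZ : ∀ l t, Z l (t + 1) = max (Z l t + yhat l (α t) (ω t) + g l (γ t)) 0)
    (hH : ∀ m t, H m (t + 1) = H m t + γ t m - xhat m (α t) (ω t))
    -- the Lyapunov function
    (Ly : ℕ → ℝ)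
    (hLy : ∀ t, Ly t = (1 / 2) * ∑ l, (Z l t) ^ 2 + (1 / 2) * ∑ k, (Q k t) ^ 2
        + (1 / 2) * ∑ m, (H m t) ^ 2)
    -- the interval, the C-approximate property on it, and alternative decisions
    (t₀ T : ℕ) (hT : 1 < T)
    (hCapprox : ∀ τ ∈ Finset.Ico t₀ (t₀ + T), ∀ (a' : Act) (γ' : Fin M → ℝ),
      a' ∈ A (ω τ) → γ' ∈ X → (∀ m, xmin m ≤ γ' m ∧ γ' m ≤ xmax m) →
      driftExpr ahat bhat xhat y0hat yhat g f V (ω τ)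
          (fun l => Z l τ) (fun k => Q k τ) (fun m => H m τ) (α τ) (γ τ)
        ≤ driftExpr ahat bhat xhat y0hat yhat g f V (ω τ)
          (fun l => Z l τ) (fun k => Q k τ) (fun m => H m τ) a' γ' + C)
    (αs : ℕ → Act) (γs : ℕ → Fin M → ℝ)
    (hαs : ∀ τ ∈ Finset.Ico t₀ (t₀ + T), αs τ ∈ A (ω τ))
    (hγsX : ∀ τ ∈ Finset.Ico t₀ (t₀ + T), γs τ ∈ X)
    (hγsbox : ∀ τ ∈ Finset.Ico t₀ (t₀ + T), ∀ m, xmin m ≤ γs τ m ∧ γs τ m ≤ xmax m) :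
    Ly (t₀ + T) - Ly t₀
      + ∑ τ ∈ Finset.Ico t₀ (t₀ + T), (V * y0hat (α τ) (ω τ) + V * f (γ τ))
    ≤ B * T + C * T + D * T * ((T : ℝ) - 1)
      + ∑ τ ∈ Finset.Ico t₀ (t₀ + T), (V * y0hat (αs τ) (ω τ) + V * f (γs τ))
      + ∑ l, Z l t₀ * ∑ τ ∈ Finset.Ico t₀ (t₀ + T),
          (yhat l (αs τ) (ω τ) + g l (γs τ))
      + ∑ k, Q k t₀ * ∑ τ ∈ Finset.Ico t₀ (t₀ + T),
          (ahat k (αs τ) (ω τ) - bhat k (αs τ) (ω τ))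
      + ∑ m, H m t₀ * ∑ τ ∈ Finset.Ico t₀ (t₀ + T),
          (γs τ m - xhat m (αs τ) (ω τ)) := by
  have hQnn : ∀ k t, 0 ≤ Q k t := by
    intro k t
    induction t with
    | zero => exact hQ0 k
    | succ t ih =>
      rw [hQ]
      exact add_nonneg (le_max_right _ _) (hA1a _ _ (hα t) k).1
  have hZnn : ∀ l t, 0 ≤ Z l t := by
    intro l t
    induction t with
    | zero => exact hZ0 l
    | succ t ih =>
      rw [hZ]
      exact le_max_right _ _
  have hZs : ∀ l t, |Z l (t + 1) - Z l t| ≤ max (|ymax l + gmax l|) (|ymin l + gmin l|) := by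
    intro l t
    have h1 := hA1y _ _ (hα t) l
    have h2 := hgbd l (γ t) (hγbox t)
    have h0 := hZnn l t
    have hu : |yhat l (α t) (ω t) + g l (γ t)|
        ≤ max (|ymax l + gmax l|) (|ymin l + gmin l|) := by
      rw [abs_le]
      constructor
      · have := le_max_right (|ymax l + gmax l|) (|ymin l + gmin l|)
        have := neg_abs_le (ymin l + gmin l)
        linarith [h1.1, h2.1]
      · have := le_max_left (|ymax l + gmax l|) (|ymin l + gmin l|)
        have := le_abs_self (ymax l + gmax l)
        linarith [h1.2, h2.2]
    refine le_trans ?_ hu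
    rw [hZ]
    have hn := neg_abs_le (yhat l (α t) (ω t) + g l (γ t))
    have hp := le_abs_self (yhat l (α t) (ω t) + g l (γ t))
    have ha := abs_nonneg (yhat l (α t) (ω t) + g l (γ t))
    rw [abs_le]
    constructor
    · linarith [le_max_left (Z l t + yhat l (α t) (ω t) + g l (γ t)) 0]
    · have : max (Z l t + yhat l (α t) (ω t) + g l (γ t)) 0
          ≤ Z l t + |yhat l (α t) (ω t) + g l (γ t)| :=
        max_le (by linarith) (by linarith)
      linarith
  have hQs : ∀ k t, |Q k (t + 1) - Q k t| ≤ max (bmax k) (amax k) := by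
    intro k t
    have h1 := hA1a _ _ (hα t) k
    have h2 := hA1b _ _ (hα t) k
    have h0 := hQnn k t
    have hb := le_max_left (bmax k) (amax k)
    have ha := le_max_right (bmax k) (amax k)
    rw [hQ, abs_le]
    constructor
    · linarith [le_max_left (Q k t - bhat k (α t) (ω t)) 0, h1.1, h2.2]
    · have : max (Q k t - bhat k (α t) (ω t)) 0 ≤ Q k t :=
        max_le (by linarith [h2.1]) h0
      linarith [h1.2]
  have hHs : ∀ m t, |H m (t + 1) - H m t| ≤ xmax m - xmin m := by
    intro m t
    have h1 := hA1x _ _ (hα t) m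
    have h2 := hγbox t m
    rw [hH, abs_le]
    constructor <;> linarith [h1.1, h1.2, h2.1, h2.2]
  have tel : ∀ (u : ℕ → ℝ) (c : ℝ), (∀ t, |u (t + 1) - u t| ≤ c) →
      ∀ n : ℕ, |u (t₀ + n) - u t₀| ≤ n * c := by
    intro u c hu n
    induction n with
    | zero => simp
    | succ n ih =>
      have h := hu (t₀ + n)
      have e : u (t₀ + (n + 1)) - u t₀
          = (u (t₀ + n + 1) - u (t₀ + n)) + (u (t₀ + n) - u t₀) := by
        rw [← add_assoc]; ring
      rw [e]
      refine (abs_add_le _ _).trans ?_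
      push_cast
      linarith
  have frz : ∀ (u : ℕ → ℝ) (c v w : ℝ), (∀ t, |u (t + 1) - u t| ≤ c) → |v| ≤ w →
      ∀ n : ℕ, u (t₀ + n) * v ≤ u t₀ * v + n * (c * w) := by
    intro u c v w hu hv n
    have h := tel u c hu n
    have hc : 0 ≤ c := (abs_nonneg _).trans (hu 0)
    have h2 : (u (t₀ + n) - u t₀) * v ≤ (n * c) * w :=
      (le_abs_self _).trans (by
        rw [abs_mul]
        exact mul_le_mul h hv (abs_nonneg _) (by positivity))
    linarith
  -- one-slot drift
  have drift : ∀ t, Ly (t + 1) - Ly t ≤ B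
      + ∑ l, Z l t * (yhat l (α t) (ω t) + g l (γ t))
      + ∑ k, Q k t * (ahat k (α t) (ω t) - bhat k (α t) (ω t))
      + ∑ m, H m t * (γ t m - xhat m (α t) (ω t)) := by
    intro t
    have hb := hB t (α t) (γ t) (hα t) (hγX t) (hγbox t)
    have e1 : ∑ l, (Z l (t + 1)) ^ 2 ≤ ∑ l, ((Z l t) ^ 2
        + 2 * (Z l t * (yhat l (α t) (ω t) + g l (γ t)))
        + (yhat l (α t) (ω t) + g l (γ t)) ^ 2) := by
      refine Finset.sum_le_sum fun l _ => ?_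
      rw [hZ]
      rcases max_cases (Z l t + yhat l (α t) (ω t) + g l (γ t)) 0 with h | h <;> rw [h.1]
      · nlinarith
      · nlinarith [sq_nonneg (Z l t + (yhat l (α t) (ω t) + g l (γ t)))]
    have e2 : ∑ k, (Q k (t + 1)) ^ 2 ≤ ∑ k, ((Q k t) ^ 2
        + 2 * (Q k t * (ahat k (α t) (ω t) - bhat k (α t) (ω t)))
        + ((bhat k (α t) (ω t)) ^ 2 + (ahat k (α t) (ω t)) ^ 2)) := by
      refine Finset.sum_le_sum fun k _ => ?_
      have h1 := (hA1a _ _ (hα t) k).1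
      have h2 := (hA1b _ _ (hα t) k).1
      have h0 := hQnn k t
      rw [hQ]
      have p1 := mul_nonneg h1 h2
      have p2 := mul_nonneg h0 h1
      rcases max_cases (Q k t - bhat k (α t) (ω t)) 0 with h | h <;> rw [h.1]
      · nlinarith
      · nlinarith [sq_nonneg (Q k t - bhat k (α t) (ω t))]
    have e3 : ∑ m, (H m (t + 1)) ^ 2 = ∑ m, ((H m t) ^ 2
        + 2 * (H m t * (γ t m - xhat m (α t) (ω t)))
        + (γ t m - xhat m (α t) (ω t)) ^ 2) := by
      refine Finset.sum_congr rfl fun m _ => ?_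
      rw [hH]; ring
    simp only [Finset.sum_add_distrib, ← Finset.mul_sum] at e1 e2 e3 hb
    rw [hLy, hLy]
    linarith
  -- per-slot bound
  have slot : ∀ n : ℕ, n < T →
      Ly (t₀ + n + 1) - Ly (t₀ + n)
        + (V * y0hat (α (t₀ + n)) (ω (t₀ + n)) + V * f (γ (t₀ + n)))
      ≤ B + C + 2 * D * n
        + (V * y0hat (αs (t₀ + n)) (ω (t₀ + n)) + V * f (γs (t₀ + n)))
        + ∑ l, Z l t₀ * (yhat l (αs (t₀ + n)) (ω (t₀ + n)) + g l (γs (t₀ + n)))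
        + ∑ k, Q k t₀ * (ahat k (αs (t₀ + n)) (ω (t₀ + n)) - bhat k (αs (t₀ + n)) (ω (t₀ + n)))
        + ∑ m, H m t₀ * (γs (t₀ + n) m - xhat m (αs (t₀ + n)) (ω (t₀ + n))) := by
    intro n hn
    have hmem : t₀ + n ∈ Finset.Ico t₀ (t₀ + T) := by
      rw [Finset.mem_Ico]; omega
    have hd := drift (t₀ + n)
    have hc := hCapprox _ hmem _ _ (hαs _ hmem) (hγsX _ hmem) (hγsbox _ hmem)
    have hDD := hD _ _ _ (hαs _ hmem) (hγsX _ hmem) (hγsbox _ hmem)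
    simp only [driftExpr] at hc
    have f1 := Finset.sum_le_sum fun l (_ : l ∈ (Finset.univ : Finset (Fin L))) =>
      frz (Z l) _ (yhat l (αs (t₀ + n)) (ω (t₀ + n)) + g l (γs (t₀ + n))) _ (hZs l) le_rfl n
    have f2 := Finset.sum_le_sum fun k (_ : k ∈ (Finset.univ : Finset (Fin K))) =>
      frz (Q k) _ (ahat k (αs (t₀ + n)) (ω (t₀ + n)) - bhat k (αs (t₀ + n)) (ω (t₀ + n)))
        (max (bhat k (αs (t₀ + n)) (ω (t₀ + n))) (ahat k (αs (t₀ + n)) (ω (t₀ + n))))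
        (hQs k) (by
          have h1 := (hA1a _ _ (hαs _ hmem) k).1
          have h2 := (hA1b _ _ (hαs _ hmem) k).1
          rw [abs_le]
          constructor
          · linarith [le_max_left (bhat k (αs (t₀ + n)) (ω (t₀ + n)))
              (ahat k (αs (t₀ + n)) (ω (t₀ + n)))]
          · linarith [le_max_right (bhat k (αs (t₀ + n)) (ω (t₀ + n)))
              (ahat k (αs (t₀ + n)) (ω (t₀ + n)))]) n
    have f3 := Finset.sum_le_sum fun m (_ : m ∈ (Finset.univ : Finset (Fin M))) =>
      frz (H m) _ (γs (t₀ + n) m - xhat m (αs (t₀ + n)) (ω (t₀ + n)))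
        |xhat m (αs (t₀ + n)) (ω (t₀ + n)) - γs (t₀ + n) m|
        (hHs m) (abs_sub_comm _ _).le n
    have f4 : 0 ≤ ∑ m, (xmax m - xmin m) * |xhat m (αs (t₀ + n)) (ω (t₀ + n)) - γs (t₀ + n) m| :=
      Finset.sum_nonneg fun m _ => mul_nonneg ((abs_nonneg _).trans (hHs m 0)) (abs_nonneg _)
    rw [Finset.sum_add_distrib, ← Finset.mul_sum] at f1 f2 f3
    have hnn : (0 : ℝ) ≤ n := Nat.cast_nonneg n
    have key := mul_le_mul_of_nonneg_left hDD hnn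
    have key2 := mul_nonneg hnn f4
    linarith
  have main : ∀ n : ℕ, n ≤ T →
      Ly (t₀ + n) - Ly t₀
        + ∑ τ ∈ Finset.Ico t₀ (t₀ + n), (V * y0hat (α τ) (ω τ) + V * f (γ τ))
      ≤ B * n + C * n + D * n * ((n : ℝ) - 1)
        + ∑ τ ∈ Finset.Ico t₀ (t₀ + n), (V * y0hat (αs τ) (ω τ) + V * f (γs τ))
        + ∑ l, Z l t₀ * ∑ τ ∈ Finset.Ico t₀ (t₀ + n),
            (yhat l (αs τ) (ω τ) + g l (γs τ))
        + ∑ k, Q k t₀ * ∑ τ ∈ Finset.Ico t₀ (t₀ + n),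
            (ahat k (αs τ) (ω τ) - bhat k (αs τ) (ω τ))
        + ∑ m, H m t₀ * ∑ τ ∈ Finset.Ico t₀ (t₀ + n),
            (γs τ m - xhat m (αs τ) (ω τ)) := by
    intro n
    induction n with
    | zero => intro _; simp
    | succ n ih =>
      intro hn
      have h1 := ih (by omega)
      have h2 := slot n (by omega)
      have hI : ∀ F : ℕ → ℝ, ∑ τ ∈ Finset.Ico t₀ (t₀ + (n + 1)), F τ
          = ∑ τ ∈ Finset.Ico t₀ (t₀ + n), F τ + F (t₀ + n) := fun F => by
        rw [← add_assoc]
        exact Finset.sum_Ico_succ_top (by omega) F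
      simp only [hI]
      simp only [mul_add (Z _ t₀) (Finset.sum _ _), mul_add (Q _ t₀) (Finset.sum _ _),
        mul_add (H _ t₀) (Finset.sum _ _)]
      rw [Finset.sum_add_distrib (f := fun l => Z l t₀ * Finset.sum _ _),
        Finset.sum_add_distrib (f := fun k => Q k t₀ * Finset.sum _ _),
        Finset.sum_add_distrib (f := fun m => H m t₀ * Finset.sum _ _)]
      rw [← add_assoc t₀ n 1]
      push_cast
      linarith
  exact main T le_rfl
end
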